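/- Let Φ = B_n, C_n or D_n, let I ⊆ Δ, and let λ, μ ∈ Λ_I⁺ with μ = w s_βλ for some w ∈ W_I and β ∈ Ψ_λ⁺⁺. Then c(λ,μ) = 0 if and only if one of the following holds: (i) Φ = B_n (resp. C_n), β = e_i (resp. 2e_i) or β = e_i + e_j with q_{s−1} < i ≤ q_s ≤ q_{m−1} < j ≤ n for some 1 ≤ s < m; moreover λ_i = λ_j ∈ (1/2)ℤ_{>0} (resp. λ_i = λ_j ∈ ℤ_{>0}) and λ_k ∉ {0, −λ_i} for all q_{s−1} < k ≤ q_s; (ii) Φ = B_n (resp. C_n), β = e_i (resp. 2e_i) or β = e_i + e_j with q_{s−1} < i < j ≤ q_s for some 1 ≤ s < m; moreover λ_i ∈ ℤ_{>0}, λ_j = 0, λ_k ≠ −λ_i for all q_{s−1} < k ≤ q_s, and λ_l ≠ λ_i for all q_{m−1} < l ≤ n; (iii) Φ = D_n, β = e_i + e_j or β = e_i + e_k with q_{s−1} < i < j ≤ q_s ≤ q_{m−1} < k < n for some 1 ≤ s < m; moreover λ_i = λ_k ∈ ℤ_{>0}, λ_j = λ_n = 0, and λ_l ≠ −λ_i for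 all q_{s−1} < l ≤ q_s. -/

import Mathlib

open scoped RealInnerProductSpace
open Classical

noncomputable section

namespace JantzenGVM

variable {V : Type*} [NormedAddCommGroup V] [InnerProductSpace ℝ V] [FiniteDimensional ℝ V]

/-- The coroot `α^∨ = 2α/⟨α,α⟩` of a vector `α` (junk value `0` when `α = 0`). -/
def coroot (α : V) : V := (2 / ⟪α, α⟫) • α

/-- The linear functional `v ↦ ⟨v, α^∨⟩`. -/
def corootForm (α : V) : V →ₗ[ℝ] ℝ where
  toFun v := ⟪v, coroot α⟫
  map_add' x y := by simp [inner_add_left]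
  map_smul' c x := by simp [inner_smul_left]

lemma corootForm_self {α : V} (h : ⟪α, α⟫ ≠ 0) : corootForm α α = 2 := by
  simp only [corootForm, coroot, LinearMap.coe_mk, AddHom.coe_mk, real_inner_smul_right]
  field_simp

/-- The reflection `s_α` as a linear automorphism of `V` (the identity when `⟨α,α⟩ = 0`). -/
def reflV (α : V) : V ≃ₗ[ℝ] V :=
  if h : ⟪α, α⟫ = 0 then LinearEquiv.refl ℝ V
  else Module.reflection (corootForm_self h)

/-- `h* = ℂ ⊗ V`, realized as the space of real-linear functionals `V → ℂ` via the
inner product; an element `λ` pairs with a root `α` by `⟨λ, α⟩ = λ α` and with the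
coroot by `⟨λ, α^∨⟩ = λ (coroot α)`. -/
abbrev HStar (V : Type*) [NormedAddCommGroup V] [InnerProductSpace ℝ V] := V →ₗ[ℝ] ℂ

/-- The canonical embedding of `V` into `h*`. -/
def emb (α : V) : HStar V where
  toFun v := (⟪α, v⟫ : ℂ)
  map_add' x y := by simp [inner_add_right]
  map_smul' c x := by simp [inner_smul_right, Complex.real_smul]

/-- The action of a linear automorphism `w` of `V` on `h*`: `(w • λ)(v) = λ(w⁻¹ v)`. -/
def wAct (w : V ≃ₗ[ℝ] V) (l : HStar V) : HStar V := l ∘ₗ (w.symm : V →ₗ[ℝ] V)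

/-- The reflection `s_β λ = λ - ⟨λ, β^∨⟩ β` acting on `h*`. -/
def sRefl (β : V) (l : HStar V) : HStar V := l - l (coroot β) • emb β

/-- The group generated by the reflections in the elements of `Φ'`. -/
def weyl (Φ' : Set V) : Subgroup (V ≃ₗ[ℝ] V) :=
  Subgroup.closure {w | ∃ α ∈ Φ', w = reflV α}

/-- A finite, reduced, crystallographic root system spanning the Euclidean space `V`,
together with a choice of positive system and the corresponding simple system. -/
structure RootSys (V : Type*) [NormedAddCommGroup V] [InnerProductSpace ℝ V]
    [FiniteDimensional ℝ V] where
  Φ : Finset V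
  pos : Finset V
  Δ : Finset V
  ne_zero : ∀ α ∈ Φ, α ≠ (0 : V)
  span_eq_top : Submodule.span ℝ (Φ : Set V) = ⊤
  reduced : ∀ α ∈ Φ, ∀ c : ℝ, c • α ∈ Φ → c = 1 ∨ c = -1
  refl_mem : ∀ α ∈ Φ, ∀ β ∈ Φ, reflV α β ∈ Φ
  crystallographic : ∀ α ∈ Φ, ∀ β ∈ Φ, ∃ n : ℤ, ⟪β, coroot α⟫ = (n : ℝ)
  pos_subset : pos ⊆ Φ
  mem_pos_or : ∀ α ∈ Φ, α ∈ pos ∨ -α ∈ pos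
  not_both : ∀ α ∈ pos, -α ∉ pos
  simple_subset : Δ ⊆ pos
  simple_indep : LinearIndependent ℝ (fun x : {a : V // a ∈ Δ} => x.1)
  simple_gen : ∀ β ∈ pos, ∃ c : V → ℝ, (∀ α ∈ Δ, 0 ≤ c α) ∧ β = ∑ α ∈ Δ, c α • α

/-- A subsystem of the root system: a subset of `Φ` closed under its own reflections. -/
def IsSubsystem (S : RootSys V) (Φ' : Set V) : Prop :=
  Φ' ⊆ (S.Φ : Set V) ∧ ∀ α ∈ Φ', ∀ β ∈ Φ', reflV α β ∈ Φ'

/-- The length of `w`, i.e. the number of positive roots sent to negative roots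
(this equals the Coxeter length for elements of the Weyl group). -/
def len (S : RootSys V) (w : V ≃ₗ[ℝ] V) : ℕ :=
  {β ∈ (S.pos : Set V) | w β ∉ (S.pos : Set V)}.ncard

/-- `Φ_I = ℤI ∩ Φ`, the subsystem generated by a subset `I` of the simple roots. -/
def PhiI (S : RootSys V) (I : Finset V) : Set V :=
  {α ∈ (S.Φ : Set V) | α ∈ Submodule.span ℤ (I : Set V)}

/-- `z` is a positive integer. -/
def IsPosInt (z : ℂ) : Prop := ∃ n : ℤ, 0 < n ∧ z = (n : ℂ)

/-- `z` is an integer. -/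
def IsInt (z : ℂ) : Prop := ∃ n : ℤ, z = (n : ℂ)

/-- `Λ_I⁺ = {λ ∈ h* : ⟨λ, α^∨⟩ ∈ ℤ_{>0} for all α ∈ I}`. -/
def LambdaP (I : Set V) : Set (HStar V) :=
  {l | ∀ α ∈ I, IsPosInt (l (coroot α))}

/-- `Λ⁺(Φ'', Φ') = {ν ∈ ℂΦ' : ⟨ν, α^∨⟩ ∈ ℤ_{>0} for all α ∈ Φ'' ∩ Φ⁺}`. -/
def LambdaPSub (S : RootSys V) (Φ'' Φ' : Set V) : Set (HStar V) :=
  {l | l ∈ Submodule.span ℂ (emb '' Φ') ∧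
       ∀ α ∈ Φ'' ∩ (S.pos : Set V), IsPosInt (l (coroot α))}

/-- `λ` is `Φ''`-regular: `⟨λ, α⟩ ≠ 0` for all `α ∈ Φ''`. -/
def IsRegularOn (Φ'' : Set V) (l : HStar V) : Prop := ∀ α ∈ Φ'', l α ≠ 0

/-- `Ψ⁺(λ, Φ'', Φ') = {β ∈ (Φ' ∩ Φ⁺) \ Φ'' : ⟨λ, β^∨⟩ ∈ ℤ_{>0}}`. -/
def PsiP (S : RootSys V) (Φ'' Φ' : Set V) (l : HStar V) : Set V :=
  {β | β ∈ Φ' ∩ (S.pos : Set V) ∧ β ∉ Φ'' ∧ IsPosInt (l (coroot β))}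

/-- `Ψ⁺⁺(λ, Φ'', Φ') = {β ∈ Ψ⁺(λ, Φ'', Φ') : s_β λ is Φ''-regular}`. -/
def PsiPP (S : RootSys V) (Φ'' Φ' : Set V) (l : HStar V) : Set V :=
  {β ∈ PsiP S Φ'' Φ' l | ∀ α ∈ Φ'', (sRefl β l) α ≠ 0}

/-- The sign function: `sgn(λ, μ) = (-1)^{ℓ(w)}` if `λ, μ` are `Φ''`-regular and
`μ = wλ` for some `w ∈ W(Φ'')`, and `0` otherwise. -/
def sgnW (S : RootSys V) (Φ'' : Set V) (l m : HStar V) : ℤ :=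
  if h : IsRegularOn Φ'' l ∧ IsRegularOn Φ'' m ∧ ∃ w, w ∈ weyl Φ'' ∧ m = wAct w l
  then (-1) ^ len S h.2.2.choose else 0

/-- The Jantzen coefficient `c(λ, μ, Φ'', Φ') = Σ_{β ∈ Ψ⁺⁺(λ,Φ'',Φ')} sgn(s_β λ, μ)`. -/
def jc (S : RootSys V) (Φ'' Φ' : Set V) (l m : HStar V) : ℤ :=
  ∑ᶠ β ∈ PsiPP S Φ'' Φ' l, sgnW S Φ'' (sRefl β l) m

/-- The symmetrized Jantzen coefficient `c̃(λ, μ, Φ'', Φ')`. -/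
def jcSym (S : RootSys V) (Φ'' Φ' : Set V) (l m : HStar V) : ℤ :=
  jc S Φ'' Φ' l m + jc S Φ'' Φ' m l

/-- `θ(λ) = Σ_{w ∈ W_I} (-1)^{ℓ(w)} e^{wλ}` in the free `ℤ`-module on `h*`. -/
def theta (S : RootSys V) (I : Finset V) (l : HStar V) : HStar V →₀ ℤ :=
  ∑ᶠ w ∈ (weyl (PhiI S I) : Set (V ≃ₗ[ℝ] V)),
    Finsupp.single (wAct w l) ((-1) ^ len S w)

/-- `Φ_λ = {α ∈ Φ : ⟨λ, α⟩ = 0}`. -/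
def singSet (S : RootSys V) (l : HStar V) : Set V :=
  {α ∈ (S.Φ : Set V) | l α = 0}

/-- `Φ_{[λ]} = {α ∈ Φ : ⟨λ, α^∨⟩ ∈ ℤ}`. -/
def integralSet (S : RootSys V) (l : HStar V) : Set V :=
  {α ∈ (S.Φ : Set V) | IsInt (l (coroot α))}

/-- `(ℚ A) ∩ Φ`, the intersection of the rational span of `A` with `Φ`.
Taking `A = Φ_I ∪ {β}` gives `Φ_{β,1}`; taking `A = Φ_λ ∪ {β}` gives `Φ_{β,2}`. -/
def ratSpanRoots (S : RootSys V) (A : Set V) : Set V :=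
  {γ ∈ (S.Φ : Set V) | ∃ (t : Finset V) (c : V → ℚ),
    (t : Set V) ⊆ A ∧ γ = ∑ α ∈ t, (c α : ℝ) • α}

/-- `Φ_{β,0}`, the irreducible component of `Φ` containing `β`. -/
def component (S : RootSys V) (β : V) : Set V :=
  {γ ∈ (S.Φ : Set V) |
    Relation.ReflTransGen
      (fun x y => x ∈ (S.Φ : Set V) ∧ y ∈ (S.Φ : Set V) ∧ ⟪x, y⟫ ≠ 0) β γ}

/-- `λ|_{Φ'}`: the unique element of `ℂΦ'` with `⟨λ|_{Φ'}, α^∨⟩ = ⟨λ, α^∨⟩`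
for all `α ∈ Φ'`. -/
def restrictW (Φ' : Set V) (l : HStar V) : HStar V :=
  letI : Nonempty (HStar V) := ⟨0⟩
  Classical.epsilon fun m =>
    m ∈ Submodule.span ℂ (emb '' Φ') ∧ ∀ α ∈ Φ', m (coroot α) = l (coroot α)

/-- `ᴵWᴶ = {w ∈ W : ℓ(uwv) = ℓ(u) + ℓ(w) + ℓ(v) for all u ∈ W_I, v ∈ W_J}`. -/
def doubleCoset (S : RootSys V) (I J : Finset V) : Set (V ≃ₗ[ℝ] V) :=
  {w | w ∈ weyl (S.Φ : Set V) ∧ ∀ u ∈ weyl (PhiI S I), ∀ v ∈ weyl (PhiI S J),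
    len S (u * w * v) = len S u + len S w + len S v}

/-- The fundamental weight `ϖ_j` relative to an enumeration `e` of the simple roots:
the unique element of `h*` with `⟨ϖ_j, α_k^∨⟩ = δ_{jk}`. -/
def fundWeight {n : ℕ} (e : Fin n → V) (j : Fin n) : HStar V :=
  letI : Nonempty (HStar V) := ⟨0⟩
  Classical.epsilon fun m => ∀ k : Fin n, m (coroot (e k)) = if k = j then 1 else 0

/-- The labels of the irreducible Dynkin types. -/
inductive LieType | A | B | C | D | E | F | G
deriving DecidableEq

/-- The Cartan matrix of type `A_n` (1-based indices): entry `(i,j)` is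
`⟨α_i, α_j^∨⟩`. -/
def cartanA (i j : ℕ) : ℤ :=
  if i = j then 2 else if i + 1 = j ∨ j + 1 = i then -1 else 0

/-- The Cartan matrices of the irreducible types in the standard (Bourbaki/Humphreys)
numbering of the Dynkin diagram: `cartanEntry t n i j = ⟨α_i, α_j^∨⟩` (1-based). -/
def cartanEntry : LieType → ℕ → ℕ → ℕ → ℤ
  | .A, _, i, j => cartanA i j
  | .B, n, i, j => if i + 1 = n ∧ j = n then -2 else cartanA i j
  | .C, n, i, j => if i = n ∧ j + 1 = n then -2 else cartanA i j
  | .D, n, i, j =>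
      if i = j then 2
      else if (i + 2 = n ∧ j = n) ∨ (i = n ∧ j + 2 = n) then -1
      else if (i + 1 = n ∧ j = n) ∨ (i = n ∧ j + 1 = n) then 0
      else cartanA i j
  | .E, _, i, j =>
      if i = j then 2
      else if (i = 1 ∧ j = 3) ∨ (i = 3 ∧ j = 1) ∨ (i = 2 ∧ j = 4) ∨ (i = 4 ∧ j = 2) then -1
      else if (i = 1 ∧ j = 2) ∨ (i = 2 ∧ j = 1) ∨ (i = 2 ∧ j = 3) ∨ (i = 3 ∧ j = 2) then 0
      else cartanA i j
  | .F, _, i, j => if i = 2 ∧ j = 3 then -2 else cartanA i j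
  | .G, _, i, j => if i = 2 ∧ j = 1 then -3 else cartanA i j

/-- The standard basis vector `e_k` (1-based index, junk `0` outside `1 ≤ k ≤ n`). -/
def stdE (n k : ℕ) : EuclideanSpace ℝ (Fin n) :=
  if h : 1 ≤ k ∧ k ≤ n then EuclideanSpace.single ⟨k - 1, by omega⟩ 1 else 0

/-- The labels `B`, `C`, `D` of the classical non-`A` types. -/
inductive BCD | B | C | D
deriving DecidableEq

/-- The root set of `B_n` / `C_n` / `D_n` in the standard realization. -/
def bcdRoots (t : BCD) (n : ℕ) : Set (EuclideanSpace ℝ (Fin n)) :=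
  {v | (∃ i j : ℕ, 1 ≤ i ∧ i < j ∧ j ≤ n ∧
          (v = stdE n i - stdE n j ∨ v = -(stdE n i - stdE n j) ∨
           v = stdE n i + stdE n j ∨ v = -(stdE n i + stdE n j))) ∨
       (match t with
        | .B => ∃ i : ℕ, 1 ≤ i ∧ i ≤ n ∧ (v = stdE n i ∨ v = -stdE n i)
        | .C => ∃ i : ℕ, 1 ≤ i ∧ i ≤ n ∧ (v = (2:ℝ) • stdE n i ∨ v = -((2:ℝ) • stdE n i))
        | .D => False)}

/-- The positive roots of `B_n` / `C_n` / `D_n` in the standard realization. -/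
def bcdPos (t : BCD) (n : ℕ) : Set (EuclideanSpace ℝ (Fin n)) :=
  {v | (∃ i j : ℕ, 1 ≤ i ∧ i < j ∧ j ≤ n ∧
          (v = stdE n i - stdE n j ∨ v = stdE n i + stdE n j)) ∨
       (match t with
        | .B => ∃ i : ℕ, 1 ≤ i ∧ i ≤ n ∧ v = stdE n i
        | .C => ∃ i : ℕ, 1 ≤ i ∧ i ≤ n ∧ v = (2:ℝ) • stdE n i
        | .D => False)}

/-- The simple roots of `B_n` / `C_n` / `D_n` in the standard realization. -/
def bcdSimple (t : BCD) (n : ℕ) : Set (EuclideanSpace ℝ (Fin n)) :=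
  {v | (∃ i : ℕ, 1 ≤ i ∧ i < n ∧ v = stdE n i - stdE n (i + 1)) ∨
       (match t with
        | .B => v = stdE n n
        | .C => v = (2:ℝ) • stdE n n
        | .D => v = stdE n (n - 1) + stdE n n)}

/-- The simple root `α_k` of `B_n` / `C_n` / `D_n` (1-based index `k`). -/
def bcdAlpha (t : BCD) (n k : ℕ) : EuclideanSpace ℝ (Fin n) :=
  if k < n then stdE n k - stdE n (k + 1)
  else match t with
  | .B => stdE n n
  | .C => (2:ℝ) • stdE n n
  | .D => stdE n (n - 1) + stdE n n



section Part1
variable {V : Type*} [NormedAddCommGroup V] [InnerProductSpace ℝ V] [FiniteDimensional ℝ V]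

lemma reflV_apply' {α : V} (h : α ≠ 0) (v : V) :
    reflV α v = v - (⟪v, coroot α⟫ : ℝ) • α := by
  have h' : ⟪α, α⟫ ≠ (0:ℝ) := by simpa using h
  simp only [reflV, h', dite_false]
  rw [Module.reflection_apply]
  rfl

lemma inner_coroot_self {α : V} (h : α ≠ 0) : (⟪α, coroot α⟫ : ℝ) = 2 := by
  have h' : ⟪α, α⟫ ≠ (0:ℝ) := by simpa using h
  exact corootForm_self h'

lemma reflV_self' {α : V} (h : α ≠ 0) : reflV α α = -α := by
  rw [reflV_apply' h, inner_coroot_self h, two_smul]; abel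

lemma reflV_reflV {α : V} (h : α ≠ 0) (v : V) : reflV α (reflV α v) = v := by
  rw [reflV_apply' h (reflV α v), reflV_apply' h v, inner_sub_left, real_inner_smul_left,
    inner_coroot_self h]
  module

lemma reflV_symm' {α : V} (h : α ≠ 0) (v : V) : (reflV α).symm v = reflV α v := by
  rw [LinearEquiv.symm_apply_eq, reflV_reflV h]

lemma reflV_inv {α : V} (h : α ≠ 0) : (reflV α)⁻¹ = reflV α := by
  ext v
  exact reflV_symm' h v

lemma wAct_mul' (u v : V ≃ₗ[ℝ] V) (l : HStar V) : wAct (u * v) l = wAct u (wAct v l) := rfl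

lemma wAct_one' (l : HStar V) : wAct 1 l = l := rfl

lemma wAct_reflV {α : V} (h : α ≠ 0) (l : HStar V) : wAct (reflV α) l = sRefl α l := by
  ext v
  simp only [wAct, sRefl, LinearMap.comp_apply, LinearEquiv.coe_coe, LinearMap.sub_apply,
    LinearMap.smul_apply, emb, LinearMap.coe_mk, AddHom.coe_mk]
  rw [reflV_symm' h, reflV_apply' h]
  simp only [map_sub, map_smul, coroot, real_inner_smul_right, Complex.real_smul, smul_eq_mul]
  rw [real_inner_comm v α]
  push_cast
  ring

lemma prod_odd (T : Finset V) (hT : ∀ β ∈ T, -β ∉ T) (u : V ≃ₗ[ℝ] V)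
    (hu : ∀ β ∈ T, u β ∈ T ∨ -(u β) ∈ T) (F : V → ℂ) (hF : ∀ v ∈ T, F (-v) = -F v) :
    ∏ β ∈ T, F (u β) = (-1) ^ (T.filter (fun β => u β ∉ T)).card * ∏ β ∈ T, F β := by
  set r : V → V := fun β => if u β ∈ T then u β else -(u β) with hr
  have hrT : ∀ β ∈ T, r β ∈ T := by
    intro β hβ
    simp only [hr]
    split_ifs with h
    · exact h
    · exact (hu β hβ).resolve_left h
  have hinj : Set.InjOn r T := by
    intro a ha b hb hab
    simp only [hr] at hab
    have hcon : ∀ a ∈ T, ∀ b ∈ T, u a = -(u b) → False := by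
      intro a ha b hb h
      rw [← map_neg] at h
      have := u.injective h
      subst this
      exact hT b hb ha
    split_ifs at hab with h1 h2 h2
    · exact u.injective hab
    · exact (hcon a ha b hb hab).elim
    · exact (hcon b hb a ha hab.symm).elim
    · exact u.injective (neg_injective hab)
  have him : T.image r = T := by
    apply Finset.eq_of_subset_of_card_le
    · intro x hx
      obtain ⟨a, ha, rfl⟩ := Finset.mem_image.1 hx
      exact hrT a ha
    · rw [Finset.card_image_of_injOn hinj]
  have h1 : ∀ β ∈ T, F (u β) = (if u β ∉ T then (-1 : ℂ) else 1) * F (r β) := by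
    intro β hβ
    simp only [hr]
    by_cases h : u β ∈ T
    · simp [h]
    · have h2 := (hu β hβ).resolve_left h
      have := hF _ h2
      rw [neg_neg] at this
      simp [h, this]
  rw [Finset.prod_congr rfl h1, Finset.prod_mul_distrib]
  congr 1
  · rw [Finset.prod_ite]
    simp
  · conv_rhs => rw [← him]
    rw [Finset.prod_image hinj]

lemma odd_refl (T : Finset V) (hT : ∀ β ∈ T, -β ∉ T) (α : V) (hα : α ≠ 0) (hαT : α ∈ T)
    (hred : ∀ β ∈ T, ∀ c : ℝ, β = c • α → β = α)
    (hu : ∀ β ∈ T, reflV α β ∈ T ∨ -(reflV α β) ∈ T) :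
    Odd (T.filter (fun β => reflV α β ∉ T)).card := by
  set N := T.filter (fun β => reflV α β ∉ T) with hN
  have hαN : α ∈ N := by
    rw [hN, Finset.mem_filter, reflV_self' hα]
    exact ⟨hαT, hT α hαT⟩
  have hev : ((N.erase α).card : ZMod 2) = 0 := by
    rw [Finset.card_eq_sum_ones]
    push_cast
    refine Finset.sum_involution (fun β _ => -(reflV α β)) ?_ ?_ ?_ ?_
    · intro a ha; decide
    · intro a ha _ h
      rw [Finset.mem_erase, hN, Finset.mem_filter] at ha
      apply ha.1
      apply hred a ha.2.1 ((1/2) * ⟪a, coroot α⟫)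
      rw [reflV_apply' hα] at h
      rw [mul_smul]
      have h2 : (⟪a, coroot α⟫ : ℝ) • α = (2:ℝ) • a := by
        rw [two_smul]
        nth_rw 2 [← h]
        abel
      rw [h2, smul_smul]; norm_num
    · intro a ha
      rw [Finset.mem_erase, hN, Finset.mem_filter] at ha
      rw [Finset.mem_erase, hN, Finset.mem_filter]
      have h1 := (hu a ha.2.1).resolve_left ha.2.2
      refine ⟨?_, h1, ?_⟩
      · intro h
        apply ha.1
        have := congrArg (reflV α) h
        rw [map_neg, reflV_reflV hα, reflV_self' hα] at this
        exact neg_injective this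
      · rw [map_neg, reflV_reflV hα]; exact hT a ha.2.1
    · intro a ha
      simp only [map_neg, neg_neg]
      exact reflV_reflV hα a
  rw [ZMod.natCast_eq_zero_iff_even] at hev
  rw [Finset.card_erase_of_mem hαN] at hev
  have : 0 < N.card := Finset.card_pos.2 ⟨α, hαN⟩
  obtain ⟨k, hk⟩ := hev
  exact ⟨k, by omega⟩

variable (S : RootSys V) (I : Finset V)

lemma Phi_neg {α : V} (h : α ∈ S.Φ) : -α ∈ S.Φ := by
  have := S.refl_mem α h α h
  rwa [reflV_self' (S.ne_zero α h)] at this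

lemma PhiI_sub {α : V} (h : α ∈ PhiI S I) : α ∈ S.Φ := h.1

lemma PhiI_ne {α : V} (h : α ∈ PhiI S I) : α ≠ 0 := S.ne_zero α h.1

lemma PhiI_neg {α : V} (h : α ∈ PhiI S I) : -α ∈ PhiI S I :=
  ⟨Phi_neg S h.1, Submodule.neg_mem _ h.2⟩

lemma PhiI_refl {α β : V} (hα : α ∈ PhiI S I) (hβ : β ∈ PhiI S I) : reflV α β ∈ PhiI S I := by
  refine ⟨S.refl_mem α hα.1 β hβ.1, ?_⟩
  rw [reflV_apply' (PhiI_ne S I hα)]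
  obtain ⟨k, hk⟩ := S.crystallographic α hα.1 β hβ.1
  rw [hk, Int.cast_smul_eq_zsmul]
  exact Submodule.sub_mem _ hβ.2 (Submodule.smul_mem _ _ hα.2)

def posI : Finset V := S.pos.filter (fun β => β ∈ PhiI S I)

def PI (l : HStar V) : ℂ := ∏ β ∈ posI S I, l β

lemma posI_or {α : V} (h : α ∈ PhiI S I) : α ∈ posI S I ∨ -α ∈ posI S I := by
  simp only [posI, Finset.mem_filter]
  rcases S.mem_pos_or α h.1 with h1 | h1
  · exact Or.inl ⟨h1, h⟩
  · exact Or.inr ⟨h1, PhiI_neg S I h⟩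

lemma reflV_neg (α : V) : reflV (-α) = reflV α := by
  by_cases h : α = 0
  · simp [h]
  · ext v
    rw [reflV_apply' h, reflV_apply' (neg_ne_zero.2 h)]
    simp [coroot, inner_neg_right, real_inner_smul_right]

lemma sRefl_neg (α : V) (l : HStar V) : sRefl (-α) l = sRefl α l := by
  by_cases h : α = 0
  · simp [h]
  · rw [← wAct_reflV h, ← wAct_reflV (neg_ne_zero.2 h), reflV_neg]

lemma PI_refl_pos {α : V} (h : α ∈ posI S I) (l : HStar V) :
    PI S I (wAct (reflV α) l) = -PI S I l := by
  have hI : α ∈ PhiI S I := (Finset.mem_filter.1 h).2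
  have hα := PhiI_ne S I hI
  have hT : ∀ β ∈ posI S I, -β ∉ posI S I := by
    intro β hβ h2
    exact S.not_both β (Finset.mem_filter.1 hβ).1 (Finset.mem_filter.1 h2).1
  have hu : ∀ β ∈ posI S I, reflV α β ∈ posI S I ∨ -(reflV α β) ∈ posI S I := by
    intro β hβ
    exact posI_or S I (PhiI_refl S I hI (Finset.mem_filter.1 hβ).2)
  have h1 := prod_odd (posI S I) hT (reflV α) hu l (by intro v _; simp)
  have h2 := odd_refl (posI S I) hT α hα h (by
    intro β hβ c hc
    have hb := (Finset.mem_filter.1 hβ)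
    rcases S.reduced α hI.1 c (hc ▸ hb.2.1) with rfl | rfl
    · simpa using hc
    · exfalso
      have : β = -α := by simpa using hc
      exact hT α h (this ▸ hβ)) hu
  rw [h2.neg_one_pow, neg_one_mul] at h1
  rw [PI, PI, ← h1]
  apply Finset.prod_congr rfl
  intro β _
  simp only [wAct, LinearMap.comp_apply, LinearEquiv.coe_coe]
  rw [reflV_symm' hα]

lemma PI_refl {α : V} (h : α ∈ PhiI S I) (l : HStar V) :
    PI S I (wAct (reflV α) l) = -PI S I l := by
  rcases posI_or S I h with h | h
  · exact PI_refl_pos S I h l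
  · rw [← reflV_neg]; exact PI_refl_pos S I h l

lemma PI_sRefl {α : V} (h : α ∈ PhiI S I) (l : HStar V) :
    PI S I (sRefl α l) = -PI S I l := by
  rw [← wAct_reflV (PhiI_ne S I h), PI_refl S I h]

lemma PI_ne {l : HStar V} (h : IsRegularOn (PhiI S I) l) : PI S I l ≠ 0 := by
  rw [PI, Finset.prod_ne_zero_iff]
  intro β hβ
  exact h β (Finset.mem_filter.1 hβ).2

lemma len_eq (w : V ≃ₗ[ℝ] V) : len S w = (S.pos.filter (fun β => w β ∉ S.pos)).card := by
  rw [len, ← Set.ncard_coe_finset]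
  congr 1
  ext β
  simp

def sg (v : V) : ℂ := if v ∈ S.pos then 1 else -1

lemma sg_neg {v : V} (h : v ∈ S.Φ) : sg S (-v) = - sg S v := by
  unfold sg
  rcases S.mem_pos_or v h with h1 | h1
  · simp [h1, S.not_both v h1]
  · have := S.not_both _ h1
    rw [neg_neg] at this
    simp [h1, this]

lemma sg_prod (w : V ≃ₗ[ℝ] V) : ∏ β ∈ S.pos, sg S (w β) = (-1) ^ len S w := by
  rw [len_eq, ← Finset.prod_const, Finset.prod_filter]
  apply Finset.prod_congr rfl
  intro β _
  unfold sg
  by_cases h : w β ∈ S.pos <;> simp [h]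

lemma len_refl_odd {α : V} (h : α ∈ S.Φ) : ((-1:ℂ)) ^ len S (reflV α) = -1 := by
  wlog hp : α ∈ S.pos generalizing α
  · have := this (Phi_neg S h) ((S.mem_pos_or α h).resolve_left hp)
    rwa [reflV_neg] at this
  rw [len_eq]
  apply Odd.neg_one_pow
  apply odd_refl S.pos S.not_both α (S.ne_zero α h) hp
  · intro β hβ c hc
    rcases S.reduced α h c (hc ▸ S.pos_subset hβ) with rfl | rfl
    · simpa using hc
    · exfalso
      have : β = -α := by simpa using hc
      exact S.not_both α hp (this ▸ hβ)
  · intro β hβ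
    exact S.mem_pos_or _ (S.refl_mem α h β (S.pos_subset hβ))

lemma weyl_main {w : V ≃ₗ[ℝ] V} (hw : w ∈ weyl (PhiI S I)) :
    (∀ β ∈ S.Φ, w β ∈ S.Φ) ∧ (∀ β ∈ PhiI S I, w.symm β ∈ PhiI S I) ∧
    ∀ l, PI S I (wAct w l) = (-1) ^ len S w * PI S I l := by
  unfold weyl at hw
  have step : ∀ α ∈ PhiI S I, ∀ w : V ≃ₗ[ℝ] V, 
    ((∀ β ∈ S.Φ, w β ∈ S.Φ) ∧ (∀ β ∈ PhiI S I, w.symm β ∈ PhiI S I) ∧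
      ∀ l, PI S I (wAct w l) = (-1) ^ len S w * PI S I l) → 
    ((∀ β ∈ S.Φ, (reflV α * w) β ∈ S.Φ) ∧ (∀ β ∈ PhiI S I, (reflV α * w).symm β ∈ PhiI S I) ∧
      ∀ l, PI S I (wAct (reflV α * w) l) = (-1) ^ len S (reflV α * w) * PI S I l) := by
    intro α hα w ⟨h1, h2, h3⟩
    refine ⟨?_, ?_, ?_⟩
    · intro β hβ
      exact S.refl_mem α hα.1 _ (h1 β hβ)
    · intro β hβ
      change w.symm ((reflV α).symm β) ∈ _
      rw [reflV_symm' (PhiI_ne S I hα)]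
      exact h2 _ (PhiI_refl S I hα hβ)
    · intro l
      rw [wAct_mul', PI_refl S I hα, h3]
      have := prod_odd S.pos S.not_both w (fun β hβ => S.mem_pos_or _ (h1 β (S.pos_subset hβ)))
        (fun v => sg S (reflV α v)) (by
          intro v hv
          simp only [map_neg]
          exact sg_neg S (S.refl_mem α hα.1 v (S.pos_subset hv)))
      rw [← len_eq, sg_prod, len_refl_odd S hα.1] at this
      rw [← sg_prod S (reflV α * w)]
      have h4 : ∏ β ∈ S.pos, sg S ((reflV α * w) β) = ∏ β ∈ S.pos, sg S (reflV α (w β)) := rfl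
      rw [h4, this]
      ring
  induction hw using Subgroup.closure_induction_left with
  | one =>
    refine ⟨fun β h => h, fun β h => h, fun l => ?_⟩
    rw [wAct_one', ← sg_prod]
    rw [Finset.prod_eq_one, one_mul]
    intro β hβ
    simp [sg, hβ]
  | mul_left x hx y hy ih =>
    obtain ⟨α, hα, rfl⟩ := hx
    exact step α hα y ih
  | inv_mul_cancel x hx y hy ih =>
    obtain ⟨α, hα, rfl⟩ := hx
    rw [reflV_inv (PhiI_ne S I hα)]
    exact step α hα y ih

lemma regular_wAct {w : V ≃ₗ[ℝ] V} (hw : w ∈ weyl (PhiI S I)) {l : HStar V}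
    (hl : IsRegularOn (PhiI S I) l) : IsRegularOn (PhiI S I) (wAct w l) := by
  intro α hα
  exact hl _ ((weyl_main S I hw).2.1 α hα)

lemma sgnW_spec {w : V ≃ₗ[ℝ] V} (hw : w ∈ weyl (PhiI S I)) {l m : HStar V}
    (hl : IsRegularOn (PhiI S I) l) (hm : m = wAct w l) :
    (sgnW S (PhiI S I) l m = 1 ∨ sgnW S (PhiI S I) l m = -1) ∧
    ((sgnW S (PhiI S I) l m : ℤ) : ℂ) * PI S I l = PI S I m := by
  have h : IsRegularOn (PhiI S I) l ∧ IsRegularOn (PhiI S I) m ∧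
      ∃ w, w ∈ weyl (PhiI S I) ∧ m = wAct w l :=
    ⟨hl, hm ▸ regular_wAct S I hw hl, w, hw, hm⟩
  unfold sgnW
  rw [dif_pos h]
  refine ⟨neg_one_pow_eq_or ℤ _, ?_⟩
  have hc := h.2.2.choose_spec
  have := (weyl_main S I hc.1).2.2 l
  rw [← hc.2] at this
  rw [this]
  push_cast
  rfl

/-- weights linked to `m` -/
def EE (l m : HStar V) : Set V :=
  {β | β ∈ PsiPP S (PhiI S I) (S.Φ : Set V) l ∧
    ∃ w, w ∈ weyl (PhiI S I) ∧ m = wAct w (sRefl β l)}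

lemma jc_eq (l m : HStar V) (E : Finset V) (hE : EE S I l m = (E : Set V)) :
    jc S (PhiI S I) (S.Φ : Set V) l m = ∑ β ∈ E, sgnW S (PhiI S I) (sRefl β l) m := by
  unfold jc
  apply finsum_mem_eq_sum_of_inter_support_eq
  rw [← hE]
  ext β
  simp only [Set.mem_inter_iff, Function.mem_support, EE, Set.mem_setOf_eq]
  constructor
  · rintro ⟨h1, h2⟩
    refine ⟨⟨h1, ?_⟩, h2⟩
    unfold sgnW at h2
    by_contra h3
    apply h2
    rw [dif_neg]
    exact fun h => h3 h.2.2
  · rintro ⟨h1, h2⟩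
    exact ⟨h1.1, h2⟩

lemma EE_spec {l m : HStar V} {β : V} (h : β ∈ EE S I l m) :
    (sgnW S (PhiI S I) (sRefl β l) m = 1 ∨ sgnW S (PhiI S I) (sRefl β l) m = -1) ∧
    ((sgnW S (PhiI S I) (sRefl β l) m : ℤ) : ℂ) * PI S I (sRefl β l) = PI S I m := by
  obtain ⟨h1, w, hw, h2⟩ := h
  exact sgnW_spec S I hw h1.2 h2

lemma jc_one {l m : HStar V} {β : V} (hE : EE S I l m = {β}) :
    jc S (PhiI S I) (S.Φ : Set V) l m ≠ 0 := by
  have h := EE_spec S I (l := l) (m := m) (β := β) (by rw [hE]; rfl)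
  rw [jc_eq S I l m {β} (by simpa using hE), Finset.sum_singleton]
  rcases h.1 with h | h <;> rw [h] <;> norm_num

lemma jc_three {l m : HStar V} {a b c : V} (hab : a ≠ b) (hac : a ≠ c) (hbc : b ≠ c)
    (hE : EE S I l m = {a, b, c}) :
    jc S (PhiI S I) (S.Φ : Set V) l m ≠ 0 := by
  have ha := EE_spec S I (l := l) (m := m) (β := a) (by rw [hE]; simp)
  have hb := EE_spec S I (l := l) (m := m) (β := b) (by rw [hE]; simp)
  have hc := EE_spec S I (l := l) (m := m) (β := c) (by rw [hE]; simp)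
  rw [jc_eq S I l m {a, b, c} (by simpa using hE), Finset.sum_insert (by simp [hab, hac]),
    Finset.sum_insert (by simp [hbc]), Finset.sum_singleton]
  rcases ha.1 with h1 | h1 <;> rcases hb.1 with h2 | h2 <;> rcases hc.1 with h3 | h3 <;>
    rw [h1, h2, h3] <;> norm_num

lemma jc_two {l m : HStar V} {a b : V} (hab : a ≠ b)
    (hE : EE S I l m = {a, b}) (hP : PI S I (sRefl b l) = - PI S I (sRefl a l)) :
    jc S (PhiI S I) (S.Φ : Set V) l m = 0 := by
  have ha' : a ∈ EE S I l m := (by rw [hE]; simp)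
  have ha := EE_spec S I (l := l) (m := m) (β := a) (by rw [hE]; simp)
  have hb := EE_spec S I (l := l) (m := m) (β := b) (by rw [hE]; simp)
  have hne := PI_ne S I (l := sRefl a l) ha'.1.2
  rw [jc_eq S I l m {a, b} (by simpa using hE), Finset.sum_insert (by simp [hab]),
    Finset.sum_singleton]
  have h2 := ha.2.trans hb.2.symm
  rw [hP] at h2
  have h3 : ((sgnW S (PhiI S I) (sRefl a l) m : ℤ) : ℂ) +
      ((sgnW S (PhiI S I) (sRefl b l) m : ℤ) : ℂ) = 0 := by
    apply mul_right_cancel₀ hne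
    linear_combination h2
  exact_mod_cast h3

/-- link by a reflection in `Φ_I` transports membership in `EE` -/
lemma weyl_refl_mem {α : V} (h : α ∈ PhiI S I) : reflV α ∈ weyl (PhiI S I) :=
  Subgroup.subset_closure ⟨α, h, rfl⟩

lemma EE_of_link {l m : HStar V} {a b : V} (ha : a ∈ EE S I l m)
    (hb : b ∈ PsiP S (PhiI S I) (S.Φ : Set V) l) {u : V ≃ₗ[ℝ] V} (hu : u ∈ weyl (PhiI S I))
    (h : sRefl b l = wAct u (sRefl a l)) : b ∈ EE S I l m := by
  obtain ⟨h1, w, hw, h2⟩ := ha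
  refine ⟨⟨hb, ?_⟩, w * u⁻¹, mul_mem hw (inv_mem hu), ?_⟩
  · rw [h]
    exact regular_wAct S I hu h1.2
  · rw [h, ← wAct_mul', inv_mul_cancel_right, h2]

end Part1

section Part2
variable {V : Type*} [NormedAddCommGroup V] [InnerProductSpace ℝ V] [FiniteDimensional ℝ V]

/-- scaling of the short/long roots -/
def cs : BCD → ℝ
  | .B => 1
  | .C => 2
  | .D => 1

/-- simple roots in the basis `f` -/
def al (t : BCD) (n : ℕ) (f : ℕ → V) (k : ℕ) : V :=
  if k < n then f k - f (k + 1)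
  else if t = BCD.D then f (n - 1) + f n else cs t • f n

/-- block index -/
def bl (m : ℕ) (q : ℕ → ℕ) (k : ℕ) : ℕ := ((Finset.Icc 1 (m - 1)).filter (fun s => q s < k)).card

structure Setup (S : RootSys V) (I : Finset V) (t : BCD) (n m : ℕ) (q : ℕ → ℕ) (f : ℕ → V) :
    Prop where
  orth : ∀ i j, 1 ≤ i → i ≤ n → 1 ≤ j → j ≤ n → (⟪f i, f j⟫ : ℝ) = if i = j then 1 else 0
  pos : ∀ v, v ∈ S.pos ↔ (∃ i j, 1 ≤ i ∧ i < j ∧ j ≤ n ∧ (v = f i - f j ∨ v = f i + f j)) ∨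
    (t ≠ BCD.D ∧ ∃ i, 1 ≤ i ∧ i ≤ n ∧ v = cs t • f i)
  Imem : ∀ v, v ∈ I ↔ ∃ k, 1 ≤ k ∧ k ≤ n ∧ v = al t n f k ∧ ∀ s, 1 ≤ s → s ≤ m - 1 → q s ≠ k
  hn : 1 ≤ n
  hn2 : t = BCD.D → 2 ≤ n
  hq0 : q 0 = 0
  hmono : ∀ s : ℕ, 1 ≤ s → s ≤ m - 1 → q (s - 1) < q s
  hqn : q (m - 1) ≤ n
  hD : t = BCD.D → q (m - 1) ≠ n - 1

namespace Setup
variable {S : RootSys V} {I : Finset V} {t : BCD} {n m : ℕ} {q : ℕ → ℕ} {f : ℕ → V}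
  (H : Setup S I t n m q f)
include H

lemma qmono {s s' : ℕ} (h : s ≤ s') (h' : s' ≤ m - 1) : q s ≤ q s' := by
  induction s', h using Nat.le_induction with
  | base => exact le_rfl
  | succ k hk ih =>
    have := H.hmono (k + 1) (by omega) h'
    simp only [Nat.add_sub_cancel] at this
    have := ih (by omega)
    omega

lemma bl_eq_iff {i j : ℕ} (h : i ≤ j) :
    bl m q i = bl m q j ↔ ∀ s, 1 ≤ s → s ≤ m - 1 → q s < j → q s < i := by
  have hsub : (Finset.Icc 1 (m - 1)).filter (fun s => q s < i) ⊆
      (Finset.Icc 1 (m - 1)).filter (fun s => q s < j) := by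
    intro s hs
    simp only [Finset.mem_filter] at hs ⊢
    exact ⟨hs.1, by omega⟩
  constructor
  · intro hb s h1 h2 h3
    have := Finset.eq_of_subset_of_card_le hsub (le_of_eq hb.symm)
    have h4 : s ∈ (Finset.Icc 1 (m - 1)).filter (fun s => q s < j) := by
      simp [h1, h2, h3]
    rw [← this] at h4
    exact (Finset.mem_filter.1 h4).2
  · intro hb
    unfold bl
    congr 1
    ext s
    simp only [Finset.mem_filter, Finset.mem_Icc]
    constructor
    · rintro ⟨h1, h2⟩; exact ⟨h1, by omega⟩
    · rintro ⟨h1, h2⟩; exact ⟨h1, hb s h1.1 h1.2 h2⟩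

lemma bl_mono {i j : ℕ} (h : i ≤ j) : bl m q i ≤ bl m q j := by
  apply Finset.card_le_card
  intro s hs
  simp only [Finset.mem_filter] at hs ⊢
  exact ⟨hs.1, by omega⟩

lemma bl_of_block {s k : ℕ} (h1 : 1 ≤ s) (h2 : s ≤ m - 1) (h3 : q (s - 1) < k) (h4 : k ≤ q s) :
    bl m q k = s - 1 := by
  have : (Finset.Icc 1 (m - 1)).filter (fun s => q s < k) = Finset.Icc 1 (s - 1) := by
    ext r
    simp only [Finset.mem_filter, Finset.mem_Icc]
    constructor
    · rintro ⟨h5, h6⟩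
      refine ⟨h5.1, ?_⟩
      by_contra h7
      have := H.qmono (s := s) (s' := r) (by omega) h5.2
      omega
    · rintro ⟨h5, h6⟩
      have := H.qmono (s := r) (s' := s - 1) h6 (by omega)
      omega
  rw [bl, this]; simp

lemma bl_of_X {k : ℕ} (h : q (m - 1) < k) : bl m q k = m - 1 := by
  have : (Finset.Icc 1 (m - 1)).filter (fun s => q s < k) = Finset.Icc 1 (m - 1) := by
    apply Finset.filter_true_of_mem
    intro r hr
    have hr := Finset.mem_Icc.1 hr
    have := H.qmono hr.2 le_rfl
    omega
  rw [bl, this]; simp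

lemma exists_block {k : ℕ} (h1 : 1 ≤ k) (h : ¬ q (m - 1) < k) :
    ∃ s, 1 ≤ s ∧ s ≤ m - 1 ∧ q (s - 1) < k ∧ k ≤ q s := by
  have hex : ∃ s, k ≤ q s := ⟨m - 1, by omega⟩
  refine ⟨Nat.find hex, ?_, ?_, ?_, Nat.find_spec hex⟩
  · by_contra h2
    have h3 := Nat.find_spec hex
    have h4 : Nat.find hex = 0 := by omega
    rw [h4, H.hq0] at h3
    omega
  · exact Nat.find_min' hex (by omega)
  · have h2 : Nat.find hex ≠ 0 := by
      intro h4
      have h3 := Nat.find_spec hex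
      rw [h4, H.hq0] at h3
      omega
    have := Nat.find_min hex (m := Nat.find hex - 1) (by omega)
    omega

lemma block_iff {s k : ℕ} (hk : 1 ≤ k) (h1 : 1 ≤ s) (h2 : s ≤ m - 1) :
    (q (s - 1) < k ∧ k ≤ q s) ↔ bl m q k = s - 1 := by
  constructor
  · rintro ⟨h3, h4⟩; exact H.bl_of_block h1 h2 h3 h4
  · intro h
    by_cases hX : q (m - 1) < k
    · have := H.bl_of_X hX
      omega
    · obtain ⟨r, r1, r2, r3, r4⟩ := H.exists_block hk hX
      have := H.bl_of_block r1 r2 r3 r4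
      have : r = s := by omega
      subst this
      exact ⟨r3, r4⟩

lemma X_iff {i j : ℕ} (hi : 1 ≤ i) (hj : 1 ≤ j) (h : bl m q i = bl m q j) :
    q (m - 1) < i ↔ q (m - 1) < j := by
  have key : ∀ i j : ℕ, 1 ≤ j → bl m q i = bl m q j → q (m - 1) < i → q (m - 1) < j := by
    intro i j hj h hX
    by_contra h2
    have h3 := H.bl_of_X hX
    obtain ⟨r, r1, r2, r3, r4⟩ := H.exists_block hj h2
    have := H.bl_of_block r1 r2 r3 r4
    omega
  exact ⟨key i j hj h, key j i hi h.symm⟩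

lemma bl_X {i j : ℕ} (hi : q (m - 1) < i) (hj : q (m - 1) < j) : bl m q i = bl m q j := by
  rw [H.bl_of_X hi, H.bl_of_X hj]

lemma al_mem {k : ℕ} (h1 : 1 ≤ k) (h2 : k ≤ n) (h : ∀ s, 1 ≤ s → s ≤ m - 1 → q s ≠ k) :
    al t n f k ∈ I := (H.Imem _).2 ⟨k, h1, h2, rfl, h⟩

lemma al_mem_lt {i j k : ℕ} (h1 : 1 ≤ i) (h : i ≤ k) (h2 : k < j) (h3 : j ≤ n)
    (hb : bl m q i = bl m q j) : f k - f (k + 1) ∈ I := by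
  have := H.al_mem (k := k) (by omega) (by omega) (by
    intro s s1 s2 hs
    have := (H.bl_eq_iff (by omega)).1 hb s s1 s2 (by omega)
    omega)
  rwa [al, if_pos (by omega)] at this

lemma diff_span {i j : ℕ} (h1 : 1 ≤ i) (h : i ≤ j) (h3 : j ≤ n) (hb : bl m q i = bl m q j) :
    f i - f j ∈ Submodule.span ℤ (I : Set V) := by
  have key : ∀ k, i ≤ k → k ≤ j → f i - f k ∈ Submodule.span ℤ (I : Set V) := by
    intro k hk
    induction k, hk using Nat.le_induction with
    | base => intro _; simp
    | succ k hk ih =>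
      intro hk2
      have h4 := ih (by omega)
      have h5 := Submodule.subset_span (R := ℤ)
        (H.al_mem_lt h1 hk (by omega) h3 hb : f k - f (k + 1) ∈ (I : Set V))
      have := Submodule.add_mem _ h4 h5
      rwa [sub_add_sub_cancel] at this
  exact key j h le_rfl

lemma al_last (hX : q (m - 1) < n) : al t n f n ∈ I := 
  H.al_mem H.hn le_rfl (by
    intro s s1 s2 hs
    have := H.qmono s2 le_rfl
    omega)

lemma sh_span (ht : t ≠ BCD.D) {i : ℕ} (h1 : 1 ≤ i) (h2 : i ≤ n) (hX : q (m - 1) < i) :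
    cs t • f i ∈ Submodule.span ℤ (I : Set V) := by
  have h3 := H.al_last (by omega)
  rw [al, if_neg (lt_irrefl _), if_neg ht] at h3
  have h3 := Submodule.subset_span (R := ℤ) (h3 : _ ∈ (I : Set V))
  have h4 := H.diff_span h1 h2 le_rfl (H.bl_X hX (by omega))
  cases t
  · simp only [cs, one_smul] at h3 ⊢
    have := Submodule.add_mem _ h4 h3
    rwa [sub_add_cancel] at this
  · simp only [cs, two_smul] at h3 ⊢
    have := Submodule.add_mem _ (Submodule.add_mem _ h4 h4) h3
    convert this using 1
    abel
  · exact absurd rfl ht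

lemma sum_span {i j : ℕ} (h1 : 1 ≤ i) (h : i < j) (h3 : j ≤ n) (hX : q (m - 1) < i) :
    f i + f j ∈ Submodule.span ℤ (I : Set V) := by
  by_cases ht : t = BCD.D
  · have h5 := H.al_last (by omega)
    rw [al, if_neg (lt_irrefl _), if_pos ht] at h5
    have h5 := Submodule.subset_span (R := ℤ) (h5 : _ ∈ (I : Set V))
    have := H.hD ht
    have h6 := H.diff_span (i := i) (j := n - 1) h1 (by omega) (by omega)
      (H.bl_X hX (by omega))
    have h7 := H.diff_span (i := j) (j := n) (by omega) (by omega) (by omega)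
      (H.bl_X (by omega) (by omega))
    have := Submodule.add_mem _ (Submodule.add_mem _ h6 h7) h5
    convert this using 1
    abel
  · have h4 := H.diff_span (i := i) (j := n) h1 (by omega) (by omega)
      (H.bl_X hX (by omega))
    have h7 := H.diff_span (i := j) (j := n) (by omega) (by omega) (by omega)
      (H.bl_X (by omega) (by omega))
    have h8 := H.sh_span ht H.hn le_rfl (by omega)
    have h9 := Submodule.add_mem _ h4 h7
    cases t
    · simp only [cs, one_smul] at h8
      have := Submodule.add_mem _ h9 (Submodule.add_mem _ h8 h8)
      convert this using 1
      abel
    · simp only [cs, two_smul] at h8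
      have := Submodule.add_mem _ h9 h8
      convert this using 1
      abel
    · exact absurd rfl ht

lemma PhiI_diff {i j : ℕ} (h1 : 1 ≤ i) (h : i < j) (h3 : j ≤ n) (hb : bl m q i = bl m q j) :
    f i - f j ∈ PhiI S I :=
  ⟨S.pos_subset ((H.pos _).2 (Or.inl ⟨i, j, h1, h, h3, Or.inl rfl⟩)), H.diff_span h1 h.le h3 hb⟩

lemma PhiI_diff' {i j : ℕ} (hi : 1 ≤ i) (hi' : i ≤ n) (hj : 1 ≤ j) (hj' : j ≤ n) (h : i ≠ j)
    (hb : bl m q i = bl m q j) : f i - f j ∈ PhiI S I := by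
  rcases lt_or_gt_of_ne h with h | h
  · exact H.PhiI_diff hi h hj' hb
  · rw [← neg_sub]; exact PhiI_neg S I (H.PhiI_diff hj h hi' hb.symm)

lemma PhiI_sum {i j : ℕ} (h1 : 1 ≤ i) (h : i < j) (h3 : j ≤ n) (hX : q (m - 1) < i) :
    f i + f j ∈ PhiI S I :=
  ⟨S.pos_subset ((H.pos _).2 (Or.inl ⟨i, j, h1, h, h3, Or.inr rfl⟩)), H.sum_span h1 h h3 hX⟩

lemma PhiI_sh (ht : t ≠ BCD.D) {i : ℕ} (h1 : 1 ≤ i) (h2 : i ≤ n) (hX : q (m - 1) < i) :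
    cs t • f i ∈ PhiI S I :=
  ⟨S.pos_subset ((H.pos _).2 (Or.inr ⟨ht, i, h1, h2, rfl⟩)), H.sh_span ht h1 h2 hX⟩

lemma sum_orth {i r : ℕ} (h1 : 1 ≤ i) (h2 : i ≤ n) (hr : r ≤ n) :
    ∑ k ∈ Finset.Icc 1 r, (⟪f i, f k⟫ : ℝ) = if i ≤ r then 1 else 0 := by
  have : ∀ k ∈ Finset.Icc 1 r, (⟪f i, f k⟫ : ℝ) = if i = k then 1 else 0 := by
    intro k hk
    have hk := Finset.mem_Icc.1 hk
    exact H.orth i k h1 h2 hk.1 (by omega)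
  rw [Finset.sum_congr rfl this, Finset.sum_ite_eq]
  simp [h1]

lemma span_kill {v : V} (hv : v ∈ Submodule.span ℤ (I : Set V)) {s : ℕ} (hs : s ≤ m - 1) :
    ∑ k ∈ Finset.Icc 1 (q s), (⟪v, f k⟫ : ℝ) = 0 := by
  by_cases hs0 : s = 0
  · subst hs0; rw [H.hq0]; simp
  have hqs : q s ≤ n := (H.qmono hs le_rfl).trans H.hqn
  induction hv using Submodule.span_induction with
  | zero => simp
  | add x y _ _ hx hy => simp only [inner_add_left, Finset.sum_add_distrib, hx, hy, add_zero]
  | smul a x _ hx =>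
    rw [← Int.cast_smul_eq_zsmul ℝ a x]
    simp only [real_inner_smul_left, ← Finset.mul_sum, hx, mul_zero]
  | mem x hx =>
    obtain ⟨k, k1, k2, rfl, hk⟩ := (H.Imem x).1 hx
    have hks := hk s (by omega) hs
    unfold al
    split_ifs with h1 h2
    · simp only [inner_sub_left, Finset.sum_sub_distrib]
      rw [H.sum_orth k1 k2 hqs, H.sum_orth (by omega) (by omega) hqs]
      have : k ≤ q s ↔ k + 1 ≤ q s := by omega
      simp [this]
    · have hkn : k = n := by omega
      subst hkn
      have h3 : ¬ k ≤ q s := by omega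
      have h4 : ¬ k - 1 ≤ q s := by
        have h5 := H.hD h2
        have h6 := H.qmono hs le_rfl
        have h7 := H.hqn
        have h8 := hk (m - 1) (by omega) le_rfl
        omega
      simp only [inner_add_left, Finset.sum_add_distrib]
      have := H.hn2 h2
      rw [H.sum_orth k1 k2 hqs, H.sum_orth (by omega) (by omega) hqs]
      simp [h3, h4]
    · have hkn : k = n := by omega
      subst hkn
      have h3 : ¬ k ≤ q s := by omega
      simp only [real_inner_smul_left, ← Finset.mul_sum]
      rw [H.sum_orth k1 k2 hqs]
      simp [h3]

lemma of_diff {i j : ℕ} (h1 : 1 ≤ i) (h : i < j) (h3 : j ≤ n) (hm : f i - f j ∈ PhiI S I) :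
    bl m q i = bl m q j := by
  rw [H.bl_eq_iff h.le]
  intro s s1 s2 hs
  have := H.span_kill hm.2 s2
  have hqs : q s ≤ n := (H.qmono s2 le_rfl).trans H.hqn
  simp only [inner_sub_left, Finset.sum_sub_distrib] at this
  rw [H.sum_orth (by omega) (by omega) hqs, H.sum_orth (by omega) (by omega) hqs] at this
  by_contra h4
  rw [if_pos (by omega), if_neg (by omega)] at this
  norm_num at this

lemma of_sum {i j : ℕ} (h1 : 1 ≤ i) (h : i < j) (h3 : j ≤ n) (hm : f i + f j ∈ PhiI S I) :
    q (m - 1) < i := by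
  have := H.span_kill hm.2 (s := m - 1) le_rfl
  have hqs : q (m - 1) ≤ n := H.hqn
  simp only [inner_add_left, Finset.sum_add_distrib] at this
  rw [H.sum_orth (by omega) (by omega) hqs, H.sum_orth (by omega) (by omega) hqs] at this
  by_contra h4
  rw [if_pos (by omega)] at this
  split_ifs at this <;> norm_num at this

lemma of_sh {i : ℕ} (h1 : 1 ≤ i) (h3 : i ≤ n) (hm : cs t • f i ∈ PhiI S I) :
    q (m - 1) < i := by
  have := H.span_kill hm.2 (s := m - 1) le_rfl
  have hqs : q (m - 1) ≤ n := H.hqn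
  simp only [real_inner_smul_left, ← Finset.mul_sum] at this
  rw [H.sum_orth (by omega) (by omega) hqs] at this
  by_contra h4
  rw [if_pos (by omega)] at this
  cases t <;> norm_num [cs] at this

/-- the roots of `Φ_I` up to sign -/
lemma PhiI_cases {α : V} (h : α ∈ PhiI S I) : ∃ α' : V, (α' = α ∨ α' = -α) ∧
    ((∃ i j, 1 ≤ i ∧ i < j ∧ j ≤ n ∧ bl m q i = bl m q j ∧ α' = f i - f j) ∨
     (∃ i j, 1 ≤ i ∧ i < j ∧ j ≤ n ∧ q (m - 1) < i ∧ α' = f i + f j) ∨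
     (t ≠ BCD.D ∧ ∃ i, 1 ≤ i ∧ i ≤ n ∧ q (m - 1) < i ∧ α' = cs t • f i)) := by
  have key : ∀ α ∈ PhiI S I, α ∈ S.pos → 
    ((∃ i j, 1 ≤ i ∧ i < j ∧ j ≤ n ∧ bl m q i = bl m q j ∧ α = f i - f j) ∨
     (∃ i j, 1 ≤ i ∧ i < j ∧ j ≤ n ∧ q (m - 1) < i ∧ α = f i + f j) ∨
     (t ≠ BCD.D ∧ ∃ i, 1 ≤ i ∧ i ≤ n ∧ q (m - 1) < i ∧ α = cs t • f i)) := by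
    intro α h hp
    rcases (H.pos α).1 hp with ⟨i, j, h1, h2, h3, rfl | rfl⟩ | ⟨ht, i, h1, h2, rfl⟩
    · exact Or.inl ⟨i, j, h1, h2, h3, H.of_diff h1 h2 h3 h, rfl⟩
    · exact Or.inr (Or.inl ⟨i, j, h1, h2, h3, H.of_sum h1 h2 h3 h, rfl⟩)
    · exact Or.inr (Or.inr ⟨ht, i, h1, h2, H.of_sh h1 h2 h, rfl⟩)
  rcases S.mem_pos_or α h.1 with hp | hp
  · exact ⟨α, Or.inl rfl, key α h hp⟩
  · exact ⟨-α, Or.inr rfl, key (-α) (PhiI_neg S I h) hp⟩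

/-- the positive roots outside `Φ_I` -/
lemma pos_cases {β : V} (hp : β ∈ S.pos) (h : β ∉ PhiI S I) :
    (∃ i j, ∃ ε : ℝ, (ε = 1 ∨ ε = -1) ∧ 1 ≤ i ∧ i < j ∧ j ≤ n ∧ bl m q i < bl m q j ∧
      ¬ q (m - 1) < j ∧ β = f i + ε • f j) ∨
    (∃ i j, ∃ ε : ℝ, (ε = 1 ∨ ε = -1) ∧ 1 ≤ i ∧ i < j ∧ j ≤ n ∧ ¬ q (m - 1) < i ∧
      q (m - 1) < j ∧ β = f i + ε • f j) ∨
    (∃ i j, 1 ≤ i ∧ i < j ∧ j ≤ n ∧ ¬ q (m - 1) < i ∧ bl m q i = bl m q j ∧ β = f i + f j) ∨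
    (t ≠ BCD.D ∧ ∃ i, 1 ≤ i ∧ i ≤ n ∧ ¬ q (m - 1) < i ∧ β = cs t • f i) := by
  rcases (H.pos β).1 hp with ⟨i, j, h1, h2, h3, hβ⟩ | ⟨ht, i, h1, h2, rfl⟩
  · by_cases hb : bl m q i = bl m q j
    · rcases hβ with rfl | rfl
      · exact absurd (H.PhiI_diff h1 h2 h3 hb) h
      · refine Or.inr (Or.inr (Or.inl ⟨i, j, h1, h2, h3, ?_, hb, rfl⟩))
        intro hX
        exact h (H.PhiI_sum h1 h2 h3 hX)
    · have hlt := lt_of_le_of_ne (H.bl_mono h2.le) hb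
      obtain ⟨ε, hε, rfl⟩ : ∃ ε : ℝ, (ε = 1 ∨ ε = -1) ∧ β = f i + ε • f j := by
        rcases hβ with rfl | rfl
        · exact ⟨-1, Or.inr rfl, by simp [sub_eq_add_neg]⟩
        · exact ⟨1, Or.inl rfl, by simp⟩
      by_cases hX : q (m - 1) < j
      · refine Or.inr (Or.inl ⟨i, j, ε, hε, h1, h2, h3, ?_, hX, rfl⟩)
        intro hXi
        exact hb (H.bl_X hXi hX)
      · exact Or.inl ⟨i, j, ε, hε, h1, h2, h3, hlt, hX, rfl⟩
  · refine Or.inr (Or.inr (Or.inr ⟨ht, i, h1, h2, ?_, rfl⟩))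
    intro hX
    exact h (H.PhiI_sh ht h1 h2 hX)

end Setup
end Part2

section Part3
variable {V : Type*} [NormedAddCommGroup V] [InnerProductSpace ℝ V] [FiniteDimensional ℝ V]

lemma sum_change (B : Finset ℕ) (x y : ℕ → ℂ) (g : ℂ → ℤ) {i j : ℕ} (hij : i ≠ j)
    (h : ∀ k ∈ B, k ≠ i → k ≠ j → y k = x k) :
    ∑ k ∈ B, g (y k) = ∑ k ∈ B, g (x k) + (if i ∈ B then g (y i) - g (x i) else 0)
      + (if j ∈ B then g (y j) - g (x j) else 0) := by
  have : ∀ k ∈ B, g (y k) = g (x k) + ((if i = k then g (y i) - g (x i) else 0)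
      + (if j = k then g (y j) - g (x j) else 0)) := by
    intro k hk
    by_cases h1 : i = k
    · subst h1
      have : ¬ j = i := fun h => hij h.symm
      simp [this]
    · by_cases h2 : j = k
      · subst h2; simp [hij]
      · rw [h k hk (fun h => h1 h.symm) (fun h => h2 h.symm)]; simp [h1, h2]
  rw [Finset.sum_congr rfl this, Finset.sum_add_distrib, Finset.sum_add_distrib,
    Finset.sum_ite_eq, Finset.sum_ite_eq]
  ring

lemma sum_change1 (B : Finset ℕ) (x y : ℕ → ℂ) (g : ℂ → ℤ) {i : ℕ}
    (h : ∀ k ∈ B, k ≠ i → y k = x k) :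
    ∑ k ∈ B, g (y k) = ∑ k ∈ B, g (x k) + (if i ∈ B then g (y i) - g (x i) else 0) := by
  have : ∀ k ∈ B, g (y k) = g (x k) + (if i = k then g (y i) - g (x i) else 0) := by
    intro k hk
    by_cases h1 : i = k
    · subst h1; simp
    · rw [h k hk (fun h => h1 h.symm)]; simp [h1]
  rw [Finset.sum_congr rfl this, Finset.sum_add_distrib, Finset.sum_ite_eq]

lemma weyl_inv {A : Type*} (S : RootSys V) (I : Finset V) (Q : HStar V → A)
    (hQ : ∀ α ∈ PhiI S I, ∀ l, Q (sRefl α l) = Q l) {w : V ≃ₗ[ℝ] V}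
    (hw : w ∈ weyl (PhiI S I)) (l : HStar V) : Q (wAct w l) = Q l := by
  unfold weyl at hw
  induction hw using Subgroup.closure_induction_left generalizing l with
  | one => rfl
  | mul_left x hx y hy ih =>
    obtain ⟨α, hα, rfl⟩ := hx
    rw [wAct_mul', wAct_reflV (PhiI_ne S I hα), hQ α hα, ih]
  | inv_mul_cancel x hx y hy ih =>
    obtain ⟨α, hα, rfl⟩ := hx
    rw [reflV_inv (PhiI_ne S I hα), wAct_mul', wAct_reflV (PhiI_ne S I hα), hQ α hα, ih]

lemma IsPosInt.add {a b : ℂ} (ha : IsPosInt a) (hb : IsPosInt b) : IsPosInt (a + b) := by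
  obtain ⟨x, hx, rfl⟩ := ha
  obtain ⟨y, hy, rfl⟩ := hb
  exact ⟨x + y, by omega, by push_cast; rfl⟩

lemma IsPosInt.ne {a : ℂ} (ha : IsPosInt a) : a ≠ 0 := by
  obtain ⟨x, hx, rfl⟩ := ha
  exact_mod_cast hx.ne'

lemma IsPosInt.neg_false {a : ℂ} (ha : IsPosInt a) (h : IsPosInt (-a)) : False := by
  have := (ha.add h).ne
  simp at this

/-- block sums -/
def bsum (n m : ℕ) (q : ℕ → ℕ) (f : ℕ → V) (g : ℂ → ℤ) (c : ℕ) (l : HStar V) : ℤ :=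
  ∑ k ∈ (Finset.Icc 1 n).filter (fun k => bl m q k = c ∧ ¬ q (m - 1) < k), g (l (f k))

def xprod (n m : ℕ) (q : ℕ → ℕ) (f : ℕ → V) (l : HStar V) : ℂ :=
  ∏ k ∈ (Finset.Icc 1 n).filter (fun k => q (m - 1) < k), l (f k)

namespace Setup
variable {S : RootSys V} {I : Finset V} {t : BCD} {n m : ℕ} {q : ℕ → ℕ} {f : ℕ → V}
  (H : Setup S I t n m q f)
include H

lemma orth_self {i : ℕ} (h1 : 1 ≤ i) (h2 : i ≤ n) : (⟪f i, f i⟫ : ℝ) = 1 := by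
  rw [H.orth i i h1 h2 h1 h2]; simp

lemma orth_ne {i j : ℕ} (h1 : 1 ≤ i) (h2 : i ≤ n) (h3 : 1 ≤ j) (h4 : j ≤ n) (h : i ≠ j) :
    (⟪f i, f j⟫ : ℝ) = 0 := by
  rw [H.orth i j h1 h2 h3 h4]; simp [h]

lemma coroot_pair {i j : ℕ} {ε : ℝ} (hε : ε = 1 ∨ ε = -1) (hi : 1 ≤ i) (hi' : i ≤ n)
    (hj : 1 ≤ j) (hj' : j ≤ n) (hij : i ≠ j) : coroot (f i + ε • f j) = f i + ε • f j := by
  have : (⟪f i + ε • f j, f i + ε • f j⟫ : ℝ) = 2 := by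
    simp only [inner_add_left, inner_add_right, real_inner_smul_left, real_inner_smul_right]
    rw [H.orth_self hi hi', H.orth_self hj hj', H.orth_ne hi hi' hj hj' hij,
      H.orth_ne hj hj' hi hi' hij.symm]
    rcases hε with rfl | rfl <;> norm_num
  rw [coroot, this]; simp

lemma coroot_sh {i : ℕ} (hi : 1 ≤ i) (hi' : i ≤ n) :
    coroot (cs t • f i) = (2 / cs t) • f i := by
  rw [coroot]
  simp only [real_inner_smul_left, real_inner_smul_right]
  rw [H.orth_self hi hi', smul_smul]
  congr 1
  cases t <;> norm_num [cs]

lemma sRefl_pair {i j : ℕ} {ε : ℝ} (hε : ε = 1 ∨ ε = -1) (hi : 1 ≤ i) (hi' : i ≤ n)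
    (hj : 1 ≤ j) (hj' : j ≤ n) (hij : i ≠ j) (l : HStar V) (v : V) :
    sRefl (f i + ε • f j) l v =
      l v - (l (f i) + ε * l (f j)) * ((⟪f i, v⟫ : ℝ) + ε * (⟪f j, v⟫ : ℝ)) := by
  rw [sRefl, H.coroot_pair hε hi hi' hj hj' hij]
  simp [emb, inner_add_left, real_inner_smul_left]

lemma sRefl_sh {i : ℕ} (hi : 1 ≤ i) (hi' : i ≤ n) (l : HStar V) (v : V) :
    sRefl (cs t • f i) l v = l v - 2 * l (f i) * (⟪f i, v⟫ : ℝ) := by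
  rw [sRefl, H.coroot_sh hi hi']
  cases t <;> simp [emb, real_inner_smul_left, cs] <;> ring

lemma pair_i {i j : ℕ} {ε : ℝ} (hε : ε = 1 ∨ ε = -1) (hi : 1 ≤ i) (hi' : i ≤ n)
    (hj : 1 ≤ j) (hj' : j ≤ n) (hij : i ≠ j) (l : HStar V) :
    sRefl (f i + ε • f j) l (f i) = - ε * l (f j) := by
  rw [H.sRefl_pair hε hi hi' hj hj' hij, H.orth_self hi hi', H.orth_ne hj hj' hi hi' hij.symm]
  push_cast; ring

lemma pair_j {i j : ℕ} {ε : ℝ} (hε : ε = 1 ∨ ε = -1) (hi : 1 ≤ i) (hi' : i ≤ n)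
    (hj : 1 ≤ j) (hj' : j ≤ n) (hij : i ≠ j) (l : HStar V) :
    sRefl (f i + ε • f j) l (f j) = - ε * l (f i) := by
  rw [H.sRefl_pair hε hi hi' hj hj' hij, H.orth_self hj hj', H.orth_ne hi hi' hj hj' hij]
  rcases hε with rfl | rfl <;> push_cast <;> ring

lemma pair_k {i j k : ℕ} {ε : ℝ} (hε : ε = 1 ∨ ε = -1) (hi : 1 ≤ i) (hi' : i ≤ n)
    (hj : 1 ≤ j) (hj' : j ≤ n) (hij : i ≠ j) (l : HStar V) (hk : 1 ≤ k) (hk' : k ≤ n)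
    (hki : k ≠ i) (hkj : k ≠ j) :
    sRefl (f i + ε • f j) l (f k) = l (f k) := by
  rw [H.sRefl_pair hε hi hi' hj hj' hij, H.orth_ne hi hi' hk hk' hki.symm,
    H.orth_ne hj hj' hk hk' hkj.symm]
  push_cast; ring

lemma sh_i {i : ℕ} (hi : 1 ≤ i) (hi' : i ≤ n) (l : HStar V) :
    sRefl (cs t • f i) l (f i) = - l (f i) := by
  rw [H.sRefl_sh hi hi', H.orth_self hi hi']
  push_cast; ring

lemma sh_k {i k : ℕ} (hi : 1 ≤ i) (hi' : i ≤ n) (l : HStar V) (hk : 1 ≤ k) (hk' : k ≤ n)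
    (hki : k ≠ i) :
    sRefl (cs t • f i) l (f k) = l (f k) := by
  rw [H.sRefl_sh hi hi', H.orth_ne hi hi' hk hk' hki.symm]
  push_cast; ring

lemma bsum_pair (g : ℂ → ℤ) (c : ℕ) {i j : ℕ} {ε : ℝ} (hε : ε = 1 ∨ ε = -1) (hi : 1 ≤ i)
    (hi' : i ≤ n) (hj : 1 ≤ j) (hj' : j ≤ n) (hij : i ≠ j) (l : HStar V) :
    bsum n m q f g c (sRefl (f i + ε • f j) l) = bsum n m q f g c l +
      (if bl m q i = c ∧ ¬ q (m - 1) < i then g (-ε * l (f j)) - g (l (f i)) else 0) +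
      (if bl m q j = c ∧ ¬ q (m - 1) < j then g (-ε * l (f i)) - g (l (f j)) else 0) := by
  unfold bsum
  rw [sum_change _ (fun k => l (f k)) (fun k => sRefl (f i + ε • f j) l (f k)) g hij]
  · simp only [Finset.mem_filter, Finset.mem_Icc, hi, hi', hj, hj', true_and]
    rw [H.pair_i hε hi hi' hj hj' hij, H.pair_j hε hi hi' hj hj' hij]
  · intro k hk h1 h2
    simp only [Finset.mem_filter, Finset.mem_Icc] at hk
    exact H.pair_k hε hi hi' hj hj' hij l hk.1.1 hk.1.2 h1 h2

lemma bsum_sh (g : ℂ → ℤ) (c : ℕ) {i : ℕ} (hi : 1 ≤ i) (hi' : i ≤ n) (l : HStar V) :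
    bsum n m q f g c (sRefl (cs t • f i) l) = bsum n m q f g c l +
      (if bl m q i = c ∧ ¬ q (m - 1) < i then g (- l (f i)) - g (l (f i)) else 0) := by
  unfold bsum
  rw [sum_change1 _ (fun k => l (f k)) (fun k => sRefl (cs t • f i) l (f k)) g (i := i)]
  · simp only [Finset.mem_filter, Finset.mem_Icc, hi, hi', true_and]
    rw [H.sh_i hi hi']
  · intro k hk h1
    simp only [Finset.mem_filter, Finset.mem_Icc] at hk
    exact H.sh_k hi hi' l hk.1.1 hk.1.2 h1

lemma bsum_inv (g : ℂ → ℤ) (c : ℕ) {w : V ≃ₗ[ℝ] V} (hw : w ∈ weyl (PhiI S I)) (l : HStar V) :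
    bsum n m q f g c (wAct w l) = bsum n m q f g c l := by
  refine weyl_inv S I (bsum n m q f g c) ?_ hw l
  intro α hα l
  obtain ⟨α', hα', h⟩ := H.PhiI_cases hα
  have : sRefl α l = sRefl α' l := by
    rcases hα' with rfl | rfl
    · rfl
    · rw [sRefl_neg]
  rw [this]
  rcases h with ⟨i, j, h1, h2, h3, hb, rfl⟩ | ⟨i, j, h1, h2, h3, hb, rfl⟩ | ⟨ht, i, h1, h2, hb, rfl⟩
  · have := H.bsum_pair g c (i := i) (j := j) (ε := -1) (Or.inr rfl) h1 (by omega) (by omega) h3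
      (by omega) l
    rw [neg_one_smul, ← sub_eq_add_neg] at this
    have hX := H.X_iff (i := i) (j := j) h1 (by omega) hb
    rw [this, hb]
    simp only [hX]
    split_ifs <;> simp <;> ring
  · have := H.bsum_pair g c (i := i) (j := j) (ε := 1) (Or.inl rfl) h1 (by omega) (by omega) h3
      (by omega) l
    rw [one_smul] at this
    rw [this, if_neg (by omega), if_neg (by omega)]
    simp
  · rw [H.bsum_sh g c h1 h2, if_neg (by omega)]; simp

lemma xprod_pair {i j : ℕ} {ε : ℝ} (hε : ε = 1 ∨ ε = -1) (hi : 1 ≤ i) (hij : i < j) (hj' : j ≤ n)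
    (hX : q (m - 1) < i) (l : HStar V) :
    xprod n m q f (sRefl (f i + ε • f j) l) = xprod n m q f l := by
  unfold xprod
  set B := (Finset.Icc 1 n).filter (fun k => q (m - 1) < k) with hB
  have hiB : i ∈ B := by simp [hB]; omega
  have hjB : j ∈ B.erase i := by simp [hB]; omega
  rw [← Finset.mul_prod_erase B _ hiB, ← Finset.mul_prod_erase (B.erase i) _ hjB,
    ← Finset.mul_prod_erase B (fun k => l (f k)) hiB, 
    ← Finset.mul_prod_erase (B.erase i) (fun k => l (f k)) hjB]
  have : ∏ k ∈ (B.erase i).erase j, sRefl (f i + ε • f j) l (f k) =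
      ∏ k ∈ (B.erase i).erase j, l (f k) := by
    apply Finset.prod_congr rfl
    intro k hk
    simp only [Finset.mem_erase, hB, Finset.mem_filter, Finset.mem_Icc] at hk
    exact H.pair_k hε hi (by omega) (by omega) hj' (by omega) l hk.2.2.1.1 hk.2.2.1.2 hk.2.1 hk.1
  rw [this, H.pair_i hε hi (by omega) (by omega) hj' (by omega),
    H.pair_j hε hi (by omega) (by omega) hj' (by omega)]
  rcases hε with rfl | rfl <;> push_cast <;> ring

lemma xprod_inv (ht : t = BCD.D) {w : V ≃ₗ[ℝ] V} (hw : w ∈ weyl (PhiI S I)) (l : HStar V) :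
    xprod n m q f (wAct w l) = xprod n m q f l := by
  refine weyl_inv S I (xprod n m q f) ?_ hw l
  intro α hα l
  obtain ⟨α', hα', h⟩ := H.PhiI_cases hα
  have : sRefl α l = sRefl α' l := by
    rcases hα' with rfl | rfl
    · rfl
    · rw [sRefl_neg]
  rw [this]
  rcases h with ⟨i, j, h1, h2, h3, hb, rfl⟩ | ⟨i, j, h1, h2, h3, hb, rfl⟩ | ⟨ht', _⟩
  · by_cases hX : q (m - 1) < i
    · have := H.xprod_pair (i := i) (j := j) (ε := -1) (Or.inr rfl) h1 h2 h3 hX l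
      rw [neg_one_smul, ← sub_eq_add_neg] at this
      exact this
    · have hX' := hX
      rw [H.X_iff (i := i) (j := j) h1 (by omega) hb] at hX'
      apply Finset.prod_congr rfl
      intro k hk
      simp only [Finset.mem_filter, Finset.mem_Icc] at hk
      have := H.pair_k (i := i) (j := j) (k := k) (ε := -1) (Or.inr rfl) h1 (by omega) (by omega)
        h3 (by omega) l hk.1.1 hk.1.2 (by rintro rfl; exact hX hk.2) (by rintro rfl; exact hX' hk.2)
      rwa [neg_one_smul, ← sub_eq_add_neg] at this
  · have := H.xprod_pair (i := i) (j := j) (ε := 1) (Or.inl rfl) h1 h2 h3 hb l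
    rw [one_smul] at this
    exact this
  · exact absurd ht ht'

/-! dominance -/

lemma coroot_diff {i j : ℕ} (hi : 1 ≤ i) (hi' : i ≤ n)
    (hj : 1 ≤ j) (hj' : j ≤ n) (hij : i ≠ j) : coroot (f i - f j) = f i - f j := by
  have := H.coroot_pair (ε := -1) (Or.inr rfl) hi hi' hj hj' hij
  simpa [← sub_eq_add_neg] using this

lemma coroot_sum {i j : ℕ} (hi : 1 ≤ i) (hi' : i ≤ n)
    (hj : 1 ≤ j) (hj' : j ≤ n) (hij : i ≠ j) : coroot (f i + f j) = f i + f j := by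
  have := H.coroot_pair (ε := 1) (Or.inl rfl) hi hi' hj hj' hij
  simpa using this

variable {l : HStar V} (hl : l ∈ LambdaP (I : Set V))
include hl

lemma dom1 {i j : ℕ} (h1 : 1 ≤ i) (h : i < j) (h3 : j ≤ n) (hb : bl m q i = bl m q j) :
    IsPosInt (l (f i) - l (f j)) := by
  have stp : ∀ k, i ≤ k → k < j → IsPosInt (l (f k) - l (f (k+1))) := by
    intro k hk hk2
    have := hl _ (H.al_mem_lt h1 hk hk2 h3 hb)
    rwa [H.coroot_diff (by omega) (by omega) (by omega) (by omega) (by omega), map_sub] at this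
  have key : ∀ k, i + 1 ≤ k → k ≤ j → IsPosInt (l (f i) - l (f k)) := by
    intro k hk
    induction k, hk using Nat.le_induction with
    | base => intro h4; exact stp i le_rfl h
    | succ k hk ih =>
      intro hk2
      have := (ih (by omega)).add (stp k (by omega) (by omega))
      rwa [sub_add_sub_cancel] at this
  exact key j h le_rfl

lemma dom_last (hX : q (m - 1) < n) : IsPosInt (l (coroot (al t n f n))) := 
  hl _ (H.al_last hX)

lemma dom_sh (ht : t ≠ BCD.D) {i : ℕ} (h1 : 1 ≤ i) (h2 : i ≤ n) (hX : q (m - 1) < i) :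
    IsPosInt ((2 / cs t : ℝ) * l (f i)) := by
  have h3 := H.dom_last hl (by omega)
  rw [al, if_neg (lt_irrefl _), if_neg ht, H.coroot_sh H.hn le_rfl, map_smul,
    Complex.real_smul] at h3
  rcases h2.eq_or_lt with rfl | h4
  · exact h3
  · have h5 := H.dom1 hl h1 h4 le_rfl (H.bl_X hX (by omega))
    cases t
    · simp only [cs] at h3 ⊢
      norm_num at h3 ⊢
      have := (h5.add h5).add h3
      convert this using 1
      ring
    · simp only [cs] at h3 ⊢
      norm_num at h3 ⊢
      have := h5.add h3
      convert this using 1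
      ring
    · exact absurd rfl ht

lemma dom_le {i j : ℕ} (h1 : 1 ≤ i) (h : i ≤ j) (h3 : j ≤ n) (hb : bl m q i = bl m q j)
    {a : ℂ} (ha : IsPosInt a) :
    IsPosInt (l (f i) - l (f j) + a) := by
  rcases h.eq_or_lt with rfl | h
  · simpa using ha
  · exact (H.dom1 hl h1 h h3 hb).add ha

lemma dom2 {i j : ℕ} (h1 : 1 ≤ i) (h : i < j) (h3 : j ≤ n) (hX : q (m - 1) < i) :
    IsPosInt (l (f i) + l (f j)) := by
  by_cases ht : t = BCD.D
  · have h5 := H.dom_last hl (by omega)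
    have := H.hD ht
    have := H.hn2 ht
    rw [al, if_neg (lt_irrefl _), if_pos ht, H.coroot_sum (by omega) (by omega) (by omega)
      (by omega) (by omega), map_add] at h5
    have h6 := H.dom_le hl (i := i) (j := n - 1) h1 (by omega) (by omega)
      (H.bl_X hX (by omega)) h5
    have h7 := H.dom_le hl (i := j) (j := n) (by omega) (by omega) (by omega)
      (H.bl_X (by omega) (by omega)) h6
    convert h7 using 1
    ring
  · have h4 := H.dom_sh hl ht (i := n) H.hn le_rfl (by omega)
    have h5 : IsPosInt (2 * l (f n)) := by
      cases t
      · simpa [cs] using h4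
      · simp [cs] at h4
        have := h4.add h4
        rwa [← two_mul] at this
      · exact absurd rfl ht
    have h6 := H.dom_le hl (i := i) (j := n) h1 (by omega) (by omega)
      (H.bl_X hX (by omega)) h5
    have h7 := H.dom_le hl (i := j) (j := n) (by omega) (by omega) (by omega)
      (H.bl_X (by omega) (by omega)) h6
    convert h7 using 1
    ring

/-- entries in a block are distinct -/
lemma reg1 {i j : ℕ} (hi : 1 ≤ i) (hi' : i ≤ n) (hj : 1 ≤ j) (hj' : j ≤ n)
    (hb : bl m q i = bl m q j) (h : l (f i) = l (f j)) : i = j := by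
  by_contra hne
  rcases lt_or_gt_of_ne hne with h4 | h4
  · exact (H.dom1 hl hi h4 hj' hb).ne (by rw [h, sub_self])
  · exact (H.dom1 hl hj h4 hi' hb.symm).ne (by rw [h, sub_self])

lemma reg2 {i j : ℕ} (hi : 1 ≤ i) (hi' : i ≤ n) (hj : 1 ≤ j) (hj' : j ≤ n)
    (hX : q (m - 1) < i) (hX' : q (m - 1) < j) (h : l (f i) = - l (f j)) : i = j := by
  by_contra hne
  rcases lt_or_gt_of_ne hne with h4 | h4
  · exact (H.dom2 hl hi h4 hj' hX).ne (by rw [h]; ring)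
  · exact (H.dom2 hl hj h4 hi' hX').ne (by rw [h]; ring)

lemma reg3 (ht : t ≠ BCD.D) {i : ℕ} (h1 : 1 ≤ i) (h2 : i ≤ n) (hX : q (m - 1) < i) :
    l (f i) ≠ 0 := by
  intro h
  have := (H.dom_sh hl ht h1 h2 hX).ne
  rw [h] at this
  simp at this

end Setup
end Part3

section Part4
variable {V : Type*} [NormedAddCommGroup V] [InnerProductSpace ℝ V] [FiniteDimensional ℝ V]

/-- indicator function -/
def ind (a : ℂ) : ℂ → ℤ := fun v => if v = a then 1 else 0

lemma pair_det {u v u' v' : ℂ} (h : u ≠ v) (hg : ∀ g : ℂ → ℤ, g v - g u = g v' - g u') :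
    u = u' ∧ v = v' := by
  have h1 := hg (ind u)
  have h2 := hg (ind v)
  simp only [ind, if_true, h, h.symm, if_false] at h1 h2
  constructor
  · by_contra h3
    have h3' : u' ≠ u := fun h => h3 h.symm
    rw [if_neg h3'] at h1
    split_ifs at h1 <;> omega
  · by_contra h3
    have h3' : v' ≠ v := fun h => h3 h.symm
    rw [if_neg h3'] at h2
    split_ifs at h2 <;> omega

lemma double_single {a b u v : ℂ} (hab : a ≠ b) (ha : a ≠ 0) (hb : b ≠ 0) (hab' : a ≠ -b)
    (hg : ∀ g : ℂ → ℤ, g (-b) - g a + (g (-a) - g b) = g v - g u) : False := by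
  have h1 := hg (ind a)
  have h2 := hg (ind b)
  have e1 : -b ≠ a := hab'.symm
  have e2 : -a ≠ a := fun h => ha (neg_eq_self.1 h)
  have e3 : -b ≠ b := fun h => hb (neg_eq_self.1 h)
  have e4 : -a ≠ b := fun h => hab' (by rw [← h, neg_neg])
  simp only [ind, if_true, e1, e2, e3, e4, hab, hab.symm, if_false] at h1 h2
  split_ifs at h1 h2 <;> try omega
  simp_all

lemma double_double {a b a' b' : ℂ} (hab : a ≠ b) (ha : a ≠ 0) (hb : b ≠ 0) (hab' : a ≠ -b)
    (hg : ∀ g : ℂ → ℤ, g (-b) - g a + (g (-a) - g b) = g (-b') - g a' + (g (-a') - g b')) :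
    (a = a' ∨ a = b') ∧ (b = a' ∨ b = b') := by
  have h1 := hg (ind a)
  have h2 := hg (ind b)
  have e1 : -b ≠ a := hab'.symm
  have e2 : -a ≠ a := fun h => ha (neg_eq_self.1 h)
  have e3 : -b ≠ b := fun h => hb (neg_eq_self.1 h)
  have e4 : -a ≠ b := fun h => hab' (by rw [← h, neg_neg])
  simp only [ind, if_true, e1, e2, e3, e4, hab, hab.symm, if_false] at h1 h2
  constructor
  · by_contra h3
    push Not at h3
    rw [if_neg h3.1.symm, if_neg h3.2.symm] at h1
    split_ifs at h1 <;> omega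
  · by_contra h3
    push Not at h3
    rw [if_neg h3.1.symm, if_neg h3.2.symm] at h2
    split_ifs at h2 <;> omega

/-- members of the class attached to the index `i` -/
def Cl (t : BCD) (n m : ℕ) (q : ℕ → ℕ) (f : ℕ → V) (l : HStar V) (i : ℕ) (β : V) : Prop :=
  1 ≤ i ∧ i ≤ n ∧ ¬ q (m - 1) < i ∧ l (f i) ≠ 0 ∧
  ((t ≠ BCD.D ∧ β = cs t • f i) ∨
   (∃ j, 1 ≤ j ∧ j ≤ n ∧ j ≠ i ∧ bl m q j = bl m q i ∧ l (f j) = 0 ∧ β = f i + f j) ∨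
   (∃ j, ∃ ε : ℝ, (ε = 1 ∨ ε = -1) ∧ i < j ∧ j ≤ n ∧ q (m - 1) < j ∧
     (ε : ℂ) * l (f j) = l (f i) ∧ β = f i + ε • f j))

def chg (n m : ℕ) (q : ℕ → ℕ) (f : ℕ → V) (l : HStar V) (β : V) (c : ℕ) (g : ℂ → ℤ) : ℤ :=
  bsum n m q f g c (sRefl β l) - bsum n m q f g c l

def K0 (n m : ℕ) (q : ℕ → ℕ) (f : ℕ → V) (l : HStar V) (β : V) (i j : ℕ) (ε : ℝ) : Prop :=
  (ε = 1 ∨ ε = -1) ∧ 1 ≤ i ∧ i < j ∧ j ≤ n ∧ bl m q i < bl m q j ∧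
      ¬ q (m - 1) < j ∧ l (f i) ≠ -ε * l (f j) ∧ l (f j) ≠ -ε * l (f i) ∧ β = f i + ε • f j

def K1 (n m : ℕ) (q : ℕ → ℕ) (f : ℕ → V) (l : HStar V) (β : V) (i j : ℕ) (ε : ℝ) : Prop :=
  (ε = 1 ∨ ε = -1) ∧ 1 ≤ i ∧ i < j ∧ j ≤ n ∧ ¬ q (m - 1) < i ∧ q (m - 1) < j ∧
    l (f i) ≠ -ε * l (f j) ∧ (ε : ℂ) * l (f j) ≠ l (f i) ∧ β = f i + ε • f j

def K2 (n m : ℕ) (q : ℕ → ℕ) (f : ℕ → V) (l : HStar V) (β : V) (i j : ℕ) : Prop :=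
  1 ≤ i ∧ i < j ∧ j ≤ n ∧ ¬ q (m - 1) < i ∧ bl m q i = bl m q j ∧ l (f i) ≠ 0 ∧ l (f j) ≠ 0 ∧
    l (f i) ≠ - l (f j) ∧ β = f i + f j

namespace Setup
variable {S : RootSys V} {I : Finset V} {t : BCD} {n m : ℕ} {q : ℕ → ℕ} {f : ℕ → V}
  (H : Setup S I t n m q f) {l : HStar V}
include H

lemma kinds {β : V} (h : β ∈ PsiP S (PhiI S I) (S.Φ : Set V) l) :
    (∃ i j ε, K0 n m q f l β i j ε) ∨ (∃ i j ε, K1 n m q f l β i j ε) ∨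
    (∃ i j, K2 n m q f l β i j) ∨ ∃ i, Cl t n m q f l i β := by
  obtain ⟨⟨_, h1⟩, h2, h3⟩ := h
  rcases H.pos_cases h1 h2 with ⟨i, j, ε, hε, hi, hij, hj, hb, hX, rfl⟩ | 
    ⟨i, j, ε, hε, hi, hij, hj, hXi, hX, rfl⟩ | ⟨i, j, hi, hij, hj, hXi, hb, rfl⟩ |
    ⟨ht, i, hi, hi', hX, rfl⟩
  · rw [H.coroot_pair hε hi (by omega) (by omega) hj (by omega)] at h3
    have h4 := h3.ne
    simp only [map_add, map_smul, Complex.real_smul] at h4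
    left
    refine ⟨i, j, ε, hε, hi, hij, hj, hb, hX, ?_, ?_, rfl⟩
    · intro h; apply h4; rw [h]; ring
    · intro h; apply h4; rw [h]; rcases hε with rfl | rfl <;> push_cast <;> ring
  · rw [H.coroot_pair hε hi (by omega) (by omega) hj (by omega)] at h3
    have h4 := h3.ne
    simp only [map_add, map_smul, Complex.real_smul] at h4
    by_cases h5 : (ε : ℂ) * l (f j) = l (f i)
    · right; right; right
      refine ⟨i, hi, by omega, hXi, ?_, Or.inr (Or.inr ⟨j, ε, hε, hij, hj, hX, h5, rfl⟩)⟩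
      intro h; apply h4; rw [h5, h, add_zero]
    · right; left
      refine ⟨i, j, ε, hε, hi, hij, hj, hXi, hX, ?_, h5, rfl⟩
      intro h; apply h4; rw [h]; ring
  · rw [H.coroot_sum hi (by omega) (by omega) hj (by omega)] at h3
    have h4 := h3.ne
    simp only [map_add] at h4
    by_cases h5 : l (f i) = 0
    · right; right; right
      refine ⟨j, by omega, hj, by rwa [← H.X_iff hi (by omega) hb], ?_, 
        Or.inr (Or.inl ⟨i, hi, by omega, by omega, hb, h5, add_comm _ _⟩)⟩
      intro h; apply h4; rw [h5, h, add_zero]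
    by_cases h6 : l (f j) = 0
    · right; right; right
      exact ⟨i, by omega, by omega, hXi, h5, 
        Or.inr (Or.inl ⟨j, by omega, by omega, by omega, hb.symm, h6, rfl⟩)⟩
    · right; right; left
      refine ⟨i, j, hi, hij, hj, hXi, hb, h5, h6, ?_, rfl⟩
      intro h; apply h4; rw [h]; ring
  · right; right; right
    refine ⟨i, hi, hi', hX, ?_, Or.inl ⟨ht, rfl⟩⟩
    intro h
    rw [H.coroot_sh hi hi', map_smul, h] at h3
    simpa using h3.ne

lemma chg0 {β : V} {i j : ℕ} {ε : ℝ} (h : K0 n m q f l β i j ε) (c : ℕ) (g : ℂ → ℤ) :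
    chg n m q f l β c g = (if bl m q i = c then g (-ε * l (f j)) - g (l (f i)) else 0) +
      (if bl m q j = c then g (-ε * l (f i)) - g (l (f j)) else 0) := by
  obtain ⟨hε, hi, hij, hj, hb, hX, h1, h2, rfl⟩ := h
  rw [chg, H.bsum_pair g c hε hi (by omega) (by omega) hj (by omega)]
  have hXi : ¬ q (m - 1) < i := by omega
  simp only [hX, hXi, not_false_eq_true, and_true]
  ring

lemma chg1 {β : V} {i j : ℕ} {ε : ℝ} (h : K1 n m q f l β i j ε) (c : ℕ) (g : ℂ → ℤ) :
    chg n m q f l β c g = (if bl m q i = c then g (-ε * l (f j)) - g (l (f i)) else 0) := by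
  obtain ⟨hε, hi, hij, hj, hX, hXj, h1, h2, rfl⟩ := h
  rw [chg, H.bsum_pair g c hε hi (by omega) (by omega) hj (by omega)]
  simp only [hX, hXj, not_false_eq_true, and_true, not_true, and_false, if_false]
  ring

lemma chg2 {β : V} {i j : ℕ} (h : K2 n m q f l β i j) (c : ℕ) (g : ℂ → ℤ) :
    chg n m q f l β c g = (if bl m q i = c then g (- l (f j)) - g (l (f i)) + 
      (g (- l (f i)) - g (l (f j))) else 0) := by
  obtain ⟨hi, hij, hj, hX, hb, h0, h0', h1, rfl⟩ := h
  have h3 := H.bsum_pair g c (i := i) (j := j) (ε := 1) (Or.inl rfl) hi (by omega) (by omega) hj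
    (by omega) l
  rw [one_smul] at h3
  have hXj := hX
  rw [H.X_iff hi (by omega) hb] at hXj
  rw [chg, h3, ← hb]
  simp only [hX, hXj, not_false_eq_true, and_true]
  split_ifs <;> simp <;> ring

lemma chg3 {β : V} {i : ℕ} (h : Cl t n m q f l i β) (c : ℕ) (g : ℂ → ℤ) :
    chg n m q f l β c g = (if bl m q i = c then g (- l (f i)) - g (l (f i)) else 0) := by
  obtain ⟨hi, hi', hX, h0, ⟨ht, rfl⟩ | ⟨j, hj, hj', hij, hb, hj0, rfl⟩ |
    ⟨j, ε, hε, hij, hj, hXj, h1, rfl⟩⟩ := h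
  · rw [chg, H.bsum_sh g c hi hi']
    simp [hX]
  · have h3 := H.bsum_pair g c (i := i) (j := j) (ε := 1) (Or.inl rfl) hi hi' hj hj' hij.symm l
    rw [one_smul] at h3
    have hXj := hX
    rw [H.X_iff hi hj hb.symm] at hXj
    rw [chg, h3, hb]
    simp only [hX, hXj, not_false_eq_true, and_true, hj0]
    split_ifs <;> simp <;> ring
  · rw [chg, H.bsum_pair g c hε hi (by omega) (by omega) hj (by omega)]
    simp only [hX, hXj, not_false_eq_true, and_true, not_true, and_false, if_false]
    rw [← h1]
    simp

lemma chg_EE {m' : HStar V} {β β' : V} (h : β ∈ EE S I l m') (h' : β' ∈ EE S I l m') (c : ℕ)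
    (g : ℂ → ℤ) : chg n m q f l β c g = chg n m q f l β' c g := by
  obtain ⟨_, w, hw, e⟩ := h
  obtain ⟨_, w', hw', e'⟩ := h'
  unfold chg
  rw [← H.bsum_inv g c hw, ← e, ← H.bsum_inv g c hw' (sRefl β' l), ← e']

lemma xprod_EE (ht : t = BCD.D) {m' : HStar V} {β β' : V} (h : β ∈ EE S I l m')
    (h' : β' ∈ EE S I l m') : xprod n m q f (sRefl β l) = xprod n m q f (sRefl β' l) := by
  obtain ⟨_, w, hw, e⟩ := h
  obtain ⟨_, w', hw', e'⟩ := h'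
  rw [← H.xprod_inv ht hw, ← e, ← H.xprod_inv ht hw' (sRefl β' l), ← e']

lemma not_K0 {β β' : V} {i j : ℕ} {ε : ℝ} (h : K0 n m q f l β i j ε) {i' : ℕ}
    (h' : ∀ c g, bl m q i' ≠ c → chg n m q f l β' c g = 0)
    (he : ∀ c g, chg n m q f l β c g = chg n m q f l β' c g) : False := by
  have hlt := h.2.2.2.2.1
  have h1 : bl m q i' = bl m q i := by
    by_contra hne
    have := he (bl m q i) (ind (l (f i)))
    rw [h' _ _ hne, H.chg0 h, if_pos rfl, if_neg (by omega)] at this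
    simp only [ind] at this
    rw [if_neg h.2.2.2.2.2.2.1.symm] at this
    norm_num at this
  have h2 : bl m q i' = bl m q j := by
    by_contra hne
    have := he (bl m q j) (ind (l (f j)))
    rw [h' _ _ hne, H.chg0 h, if_neg (by omega), if_pos rfl] at this
    simp only [ind] at this
    rw [if_neg h.2.2.2.2.2.2.2.1.symm] at this
    norm_num at this
  omega

variable (hl : l ∈ LambdaP (I : Set V))
include hl

lemma sing_sing {i i' : ℕ} {v v' : ℂ} (hi : 1 ≤ i) (hn : i ≤ n) (hi' : 1 ≤ i') (hn' : i' ≤ n)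
    (hv : l (f i) ≠ v)
    (he : ∀ (c : ℕ) (g : ℂ → ℤ), (if bl m q i = c then g v - g (l (f i)) else 0) =
      (if bl m q i' = c then g v' - g (l (f i')) else 0)) : i = i' ∧ v = v' := by
  have h1 : bl m q i' = bl m q i := by
    by_contra hne
    have := he (bl m q i) (ind (l (f i)))
    rw [if_pos rfl, if_neg hne] at this
    simp only [ind] at this
    rw [if_neg hv.symm] at this
    norm_num at this
  have h2 := pair_det (u' := l (f i')) (v' := v') hv (fun g => by
    have := he (bl m q i) g
    rwa [if_pos rfl, if_pos h1] at this)
  exact ⟨H.reg1 hl hi hn hi' hn' h1.symm h2.1, h2.2⟩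

lemma not_K2 {i j i' : ℕ} {v' : ℂ} {β : V} (h : K2 n m q f l β i j)
    (he : ∀ (c : ℕ) (g : ℂ → ℤ), chg n m q f l β c g =
      (if bl m q i' = c then g v' - g (l (f i')) else 0)) : False := by
  have hc := H.chg2 h
  obtain ⟨hi, hij, hj, hX, hb, h0, h0', h1, rfl⟩ := h
  have hne : l (f i) ≠ l (f j) := by
    intro h
    have := H.reg1 hl hi (by omega) (by omega) hj hb h
    omega
  have hg : ∀ g : ℂ → ℤ, g (- l (f j)) - g (l (f i)) + (g (- l (f i)) - g (l (f j))) =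
      (if bl m q i' = bl m q i then g v' - g (l (f i')) else 0) := by
    intro g
    rw [← he (bl m q i) g, hc, if_pos rfl]
  by_cases h2 : bl m q i' = bl m q i
  · simp only [h2, if_true] at hg
    exact double_single hne h0 h0' h1 hg
  · simp only [h2, if_false] at hg
    exact double_single (u := 0) (v := 0) hne h0 h0' h1 (by simpa using hg)

lemma key_pair {m' : HStar V} {β β' : V} (h : β ∈ EE S I l m') (h' : β' ∈ EE S I l m') :
    β = β' ∨ ∃ i, Cl t n m q f l i β ∧ Cl t n m q f l i β' := by
  have he := fun c g => H.chg_EE h h' c g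
  have hxp := fun ht => H.xprod_EE ht h h'
  have s1 : ∀ {β i j ε}, K1 n m q f l β i j ε → ∀ c g, bl m q i ≠ c → 
      chg n m q f l β c g = 0 := by
    intro β i j ε h c g hne; rw [H.chg1 h, if_neg hne]
  have s2 : ∀ {β i j}, K2 n m q f l β i j → ∀ c g, bl m q i ≠ c → chg n m q f l β c g = 0 := by
    intro β i j h c g hne; rw [H.chg2 h, if_neg hne]
  have s3 : ∀ {β i}, Cl t n m q f l i β → ∀ c g, bl m q i ≠ c → chg n m q f l β c g = 0 := by
    intro β i h c g hne; rw [H.chg3 h, if_neg hne]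
  have he' := fun c g => (he c g).symm
  rcases H.kinds h.1.1 with ⟨i, j, ε, k⟩ | ⟨i, j, ε, k⟩ | ⟨i, j, k⟩ | ⟨i, k⟩ <;>
  rcases H.kinds h'.1.1 with ⟨i', j', ε', k'⟩ | ⟨i', j', ε', k'⟩ | ⟨i', j', k'⟩ | ⟨i', k'⟩
  · -- K0 K0
    left
    have hbi : bl m q i = bl m q i' ∧ bl m q j = bl m q j' := by
      have e1 := he (bl m q i) (ind (l (f i)))
      have e2 := he (bl m q j) (ind (l (f j)))
      have hlt := k.2.2.2.2.1
      have hlt' := k'.2.2.2.2.1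
      rw [H.chg0 k, H.chg0 k', if_pos rfl, if_neg hlt.ne'] at e1
      rw [H.chg0 k, H.chg0 k', if_pos rfl, if_neg hlt.ne] at e2
      simp only [ind] at e1 e2
      rw [if_neg k.2.2.2.2.2.2.1.symm] at e1
      rw [if_neg k.2.2.2.2.2.2.2.1.symm] at e2
      simp only [if_true] at e1 e2
      have o1 : bl m q i' = bl m q i ∨ bl m q j' = bl m q i := by
        by_contra hc
        push Not at hc
        rw [if_neg hc.1, if_neg hc.2] at e1
        norm_num at e1
      have o2 : bl m q i' = bl m q j ∨ bl m q j' = bl m q j := by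
        by_contra hc
        push Not at hc
        rw [if_neg hc.1, if_neg hc.2] at e2
        norm_num at e2
      omega
    have hlt := k.2.2.2.2.1
    have p1 := pair_det (u' := l (f i')) (v' := -ε' * l (f j')) k.2.2.2.2.2.2.1 (fun g => by
      have := he (bl m q i) g
      rwa [H.chg0 k, H.chg0 k', if_pos rfl, if_neg (by omega), if_pos (by omega),
        if_neg (by omega), add_zero, add_zero] at this)
    have p2 := pair_det (u' := l (f j')) (v' := -ε' * l (f i')) k.2.2.2.2.2.2.2.1 (fun g => by
      have := he (bl m q j) g
      rwa [H.chg0 k, H.chg0 k', if_pos rfl, if_neg (by omega), if_pos hbi.2.symm,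
        if_neg (by omega), zero_add, zero_add] at this)
    obtain ⟨hε, hi, hij, hj, hb, hX, h1, h2, rfl⟩ := k
    obtain ⟨hε', hi', hij', hj', hb', hX', h1', h2', rfl⟩ := k'
    have e1 := H.reg1 hl hi (by omega) hi' (by omega) hbi.1 p1.1
    have e2 := H.reg1 hl (by omega) hj (by omega) hj' hbi.2 p2.1
    subst e1 e2
    have : ε = ε' := by
      rcases hε with rfl | rfl <;> rcases hε' with rfl | rfl <;> try rfl
      · exfalso
        have q1 := p1.2
        have q2 := p2.2
        push_cast at q1 q2 h1
        apply h1
        linear_combination (-1/2)*q1 + (-1/2)*q2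
      · exfalso
        have q1 := p1.2
        have q2 := p2.2
        push_cast at q1 q2 h1
        apply h1
        linear_combination (1/2)*q2 - (1/2)*q1
    rw [this]
  · exact (H.not_K0 k (s1 k') he).elim
  · exact (H.not_K0 k (s2 k') he).elim
  · exact (H.not_K0 k (s3 k') he).elim
  · exact (H.not_K0 k' (s1 k) he').elim
  · -- K1 K1
    left
    have hs := H.sing_sing hl (i := i) (i' := i') k.2.1 (by have := k; unfold K1 at this; omega)
      k'.2.1 (by have := k'; unfold K1 at this; omega) k.2.2.2.2.2.2.1 (fun c g => by
        rw [← H.chg1 k, ← H.chg1 k', he])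
    obtain ⟨hε, hi, hij, hj, hX, hXj, h1, h2, rfl⟩ := k
    obtain ⟨hε', hi', hij', hj', hX', hXj', h1', h2', rfl⟩ := k'
    obtain ⟨rfl, hv⟩ := hs
    have e2 : j = j' := by
      have : l (f j) = l (f j') ∨ l (f j) = - l (f j') := by
        rcases hε with rfl | rfl <;> rcases hε' with rfl | rfl <;> push_cast at hv
        · left; linear_combination -hv
        · right; linear_combination -hv
        · right; linear_combination hv
        · left; linear_combination hv
      rcases this with h | h
      · exact H.reg1 hl (by omega) hj (by omega) hj' (H.bl_X hXj hXj') h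
      · exact H.reg2 hl (by omega) hj (by omega) hj' hXj hXj' h
    subst e2
    by_cases hε0 : ε = ε'
    · rw [hε0]
    exfalso
    have hz : l (f j) = 0 := by
      rcases hε with rfl | rfl <;> rcases hε' with rfl | rfl <;> push_cast at hv
      · simp at hε0
      · linear_combination (-1/2) * hv
      · linear_combination (1/2) * hv
      · simp at hε0
    have ht : t = BCD.D := by
      by_contra ht
      exact H.reg3 hl ht (by omega) hj hXj hz
    have hp := hxp ht
    unfold xprod at hp
    set B := (Finset.Icc 1 n).filter (fun k => q (m - 1) < k) with hB
    have hjB : j ∈ B := by simp [hB]; omega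
    have hrest : ∀ ε : ℝ, (ε = 1 ∨ ε = -1) → ∏ k ∈ B.erase j, sRefl (f i + ε • f j) l (f k) =
        ∏ k ∈ B.erase j, l (f k) := by
      intro ε hε
      apply Finset.prod_congr rfl
      intro k hk
      simp only [Finset.mem_erase, hB, Finset.mem_filter, Finset.mem_Icc] at hk
      exact H.pair_k hε hi (by omega) (by omega) hj (by omega) l hk.2.1.1 hk.2.1.2
        (by omega) hk.1
    have hne : ∏ k ∈ B.erase j, l (f k) ≠ 0 := by
      rw [Finset.prod_ne_zero_iff]
      intro k hk h0
      simp only [Finset.mem_erase, hB, Finset.mem_filter, Finset.mem_Icc] at hk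
      exact hk.1 (H.reg1 hl hk.2.1.1 hk.2.1.2 (by omega) hj (H.bl_X hk.2.2 hXj) (by rw [h0, hz]))
    rw [← Finset.mul_prod_erase B _ hjB, ← Finset.mul_prod_erase B _ hjB, hrest ε hε, 
      hrest ε' hε', H.pair_j hε hi (by omega) (by omega) hj (by omega),
      H.pair_j hε' hi (by omega) (by omega) hj (by omega)] at hp
    have hp := mul_right_cancel₀ hne hp
    apply h1
    rw [hz]
    rcases hε with rfl | rfl <;> rcases hε' with rfl | rfl <;> push_cast at hp ⊢
    · simp at hε0
    · linear_combination (-1/2) * hp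
    · linear_combination (1/2) * hp
    · simp at hε0
  · exact (H.not_K2 hl k' (fun c g => by rw [he' c g, H.chg1 k])).elim
  · exfalso
    have hs := H.sing_sing hl (i := i) (i' := i') k.2.1 (by have := k; unfold K1 at this; omega)
      k'.1 k'.2.1 k.2.2.2.2.2.2.1 (fun c g => by
        rw [← H.chg1 k, ← H.chg3 k', he])
    obtain ⟨rfl, hv⟩ := hs
    apply k.2.2.2.2.2.2.2.1
    linear_combination -hv
  · exact (H.not_K0 k' (s2 k) he').elim
  · exact (H.not_K2 hl k (fun c g => by rw [he c g, H.chg1 k'])).elim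
  · -- K2 K2
    left
    have c1 := H.chg2 k
    have c2 := H.chg2 k'
    obtain ⟨hi, hij, hj, hX, hb, h0, h0', h1, rfl⟩ := k
    obtain ⟨hi', hij', hj', hX', hb', g0, g0', g1, rfl⟩ := k'
    have hne : l (f i) ≠ l (f j) := by
      intro h
      have := H.reg1 hl hi (by omega) (by omega) hj hb h
      omega
    have hg : ∀ g : ℂ → ℤ, g (- l (f j)) - g (l (f i)) + (g (- l (f i)) - g (l (f j))) =
      (if bl m q i' = bl m q i then g (- l (f j')) - g (l (f i')) + 
        (g (- l (f i')) - g (l (f j'))) else 0) := by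
      intro g
      rw [← c2 (bl m q i) g, ← he, c1, if_pos rfl]
    by_cases h2 : bl m q i' = bl m q i
    · simp only [h2, if_true] at hg
      have hd := double_double hne h0 h0' h1 hg
      have r1 : i = i' ∨ i = j' := by
        rcases hd.1 with h | h
        · left; exact H.reg1 hl hi (by omega) hi' (by omega) h2.symm h
        · right; exact H.reg1 hl hi (by omega) (by omega) hj' (by omega) h
      have r2 : j = i' ∨ j = j' := by
        rcases hd.2 with h | h
        · left; exact H.reg1 hl (by omega) (by omega) hi' (by omega) (by omega) h
        · right; exact H.reg1 hl (by omega) (by omega) (by omega) hj' (by omega) h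
      have : i = i' ∧ j = j' := by omega
      rw [this.1, this.2]
    · exfalso
      simp only [h2, if_false] at hg
      exact double_single (u := 0) (v := 0) hne h0 h0' h1 (by simpa using hg)
  · exact (H.not_K2 hl k (fun c g => by rw [he c g, H.chg3 k'])).elim
  · exact (H.not_K0 k' (s3 k) he').elim
  · exfalso
    have hs := H.sing_sing hl (i := i') (i' := i) k'.2.1 
      (by have := k'; unfold K1 at this; omega)
      k.1 k.2.1 k'.2.2.2.2.2.2.1 (fun c g => by
        rw [← H.chg1 k', ← H.chg3 k, he])
    obtain ⟨rfl, hv⟩ := hs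
    apply k'.2.2.2.2.2.2.2.1
    linear_combination -hv
  · exact (H.not_K2 hl k' (fun c g => by rw [he' c g, H.chg3 k])).elim
  · right
    have hs := H.sing_sing hl (i := i) (i' := i') k.1 k.2.1 k'.1 k'.2.1 
      (fun h => k.2.2.2.1 (self_eq_neg.1 h)) (fun c g => by
        rw [← H.chg3 k, ← H.chg3 k', he])
    obtain ⟨rfl, hv⟩ := hs
    exact ⟨i, k, k'⟩

lemma Cl_EE {m' : HStar V} {β β' : V} (h : β ∈ EE S I l m') (h' : β' ∈ EE S I l m') {i : ℕ}
    (hc : Cl t n m q f l i β) : Cl t n m q f l i β' := by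
  rcases H.key_pair hl h h' with rfl | ⟨i', k, k'⟩
  · exact hc
  · have hs := H.sing_sing hl (i := i) (i' := i') hc.1 hc.2.1 k.1 k.2.1 
      (fun h => hc.2.2.2.1 (self_eq_neg.1 h)) (fun c g => by
        rw [← H.chg3 hc, ← H.chg3 k])
    obtain ⟨rfl, hv⟩ := hs
    exact k'

end Setup
end Part4

section Part5
variable {V : Type*} [NormedAddCommGroup V] [InnerProductSpace ℝ V] [FiniteDimensional ℝ V]

lemma sRefl_invol (S : RootSys V) (I : Finset V) {α : V} (h : α ∈ PhiI S I) (l : HStar V) :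
    sRefl α (sRefl α l) = l := by
  rw [← wAct_reflV (PhiI_ne S I h), ← wAct_reflV (PhiI_ne S I h), ← wAct_mul']
  nth_rewrite 1 [← reflV_inv (PhiI_ne S I h)]
  rw [inv_mul_cancel, wAct_one']

lemma EE_link (S : RootSys V) (I : Finset V) {l m : HStar V} {a b α : V} (ha : a ∈ EE S I l m)
    (hb : b ∈ PsiP S (PhiI S I) (S.Φ : Set V) l) (hα : α ∈ PhiI S I)
    (h : sRefl b l = sRefl α (sRefl a l)) : b ∈ EE S I l m :=
  EE_of_link S I ha hb (weyl_refl_mem S I hα) (by rw [wAct_reflV (PhiI_ne S I hα), h])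

lemma EE_link' (S : RootSys V) (I : Finset V) {l m : HStar V} {a b α : V} (ha : a ∈ EE S I l m)
    (hb : b ∈ PsiP S (PhiI S I) (S.Φ : Set V) l) (hα : α ∈ PhiI S I)
    (h : sRefl a l = sRefl α (sRefl b l)) : b ∈ EE S I l m :=
  EE_link S I ha hb hα (by rw [h, sRefl_invol S I hα])

/-- zero entry in the same block -/
def D3 (n m : ℕ) (q : ℕ → ℕ) (f : ℕ → V) (l : HStar V) (i j : ℕ) : Prop :=
  1 ≤ j ∧ j ≤ n ∧ j ≠ i ∧ bl m q j = bl m q i ∧ l (f j) = 0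

/-- equal entry in the last block -/
def D2 (n m : ℕ) (q : ℕ → ℕ) (f : ℕ → V) (l : HStar V) (i j : ℕ) : Prop :=
  i < j ∧ j ≤ n ∧ q (m - 1) < j ∧ l (f j) = l (f i)

namespace Setup
variable {S : RootSys V} {I : Finset V} {t : BCD} {n m : ℕ} {q : ℕ → ℕ} {f : ℕ → V}
  (H : Setup S I t n m q f)
include H

lemma sRefl_sum {i j : ℕ} (hi : 1 ≤ i) (hi' : i ≤ n)
    (hj : 1 ≤ j) (hj' : j ≤ n) (hij : i ≠ j) (l : HStar V) (v : V) :
    sRefl (f i + f j) l v =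
      l v - (l (f i) + l (f j)) * ((⟪f i, v⟫ : ℝ) + (⟪f j, v⟫ : ℝ)) := by
  have := H.sRefl_pair (ε := 1) (Or.inl rfl) hi hi' hj hj' hij l v
  simpa using this

lemma sRefl_diff {i j : ℕ} (hi : 1 ≤ i) (hi' : i ≤ n)
    (hj : 1 ≤ j) (hj' : j ≤ n) (hij : i ≠ j) (l : HStar V) (v : V) :
    sRefl (f i - f j) l v =
      l v - (l (f i) - l (f j)) * ((⟪f i, v⟫ : ℝ) - (⟪f j, v⟫ : ℝ)) := by
  have := H.sRefl_pair (ε := -1) (Or.inr rfl) hi hi' hj hj' hij l v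
  simpa [← sub_eq_add_neg] using this

lemma link3 {i j : ℕ} (hi : 1 ≤ i) (hi' : i ≤ n)
    (hj : 1 ≤ j) (hj' : j ≤ n) (hij : i ≠ j) {l : HStar V} (h0 : l (f j) = 0) :
    sRefl (f i + f j) l = sRefl (f i - f j) (sRefl (cs t • f i) l) := by
  ext v
  rw [H.sRefl_sum hi hi' hj hj' hij, H.sRefl_diff hi hi' hj hj' hij, H.sh_i hi hi',
    H.sh_k hi hi' l hj hj' hij.symm, H.sRefl_sh hi hi', h0]
  ring

lemma link2 {i j : ℕ} (hi : 1 ≤ i) (hi' : i ≤ n)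
    (hj : 1 ≤ j) (hj' : j ≤ n) (hij : i ≠ j) {l : HStar V} (h0 : l (f j) = l (f i)) :
    sRefl (f i + f j) l = sRefl (cs t • f j) (sRefl (cs t • f i) l) := by
  ext v
  rw [H.sRefl_sum hi hi' hj hj' hij, H.sRefl_sh hj hj', 
    H.sh_k hi hi' l hj hj' hij.symm, H.sRefl_sh hi hi', h0]
  ring

lemma linkD {i j j0 z : ℕ} (hi : 1 ≤ i) (hi' : i ≤ n)
    (hj : 1 ≤ j) (hj' : j ≤ n) (hz : 1 ≤ z) (hz' : z ≤ n) (h1 : 1 ≤ j0) (h2 : j0 ≤ n) 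
    (d1 : i ≠ j) (d2 : i ≠ j0) (d3 : i ≠ z) (d4 : j ≠ j0) (d5 : j ≠ z) (d6 : j0 ≠ z)
    {l : HStar V} (e1 : l (f j) = l (f i)) (e2 : l (f j0) = 0) (e3 : l (f z) = 0) :
    sRefl (f i + f j) l =
      sRefl (f j + f z) (sRefl (f j - f z) (sRefl (f i - f j0) (sRefl (f i + f j0) l))) := by
  ext v
  rw [H.sRefl_sum hi hi' hj hj' d1]
  simp only [H.sRefl_sum hj hj' hz hz' d5, H.sRefl_diff hj hj' hz hz' d5, 
    H.sRefl_diff hi hi' h1 h2 d2, H.sRefl_sum hi hi' h1 h2 d2, e1, e2, e3,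
    H.orth_self hi hi', H.orth_self hj hj', H.orth_self hz hz', H.orth_self h1 h2,
    H.orth_ne hi hi' hj hj' d1, H.orth_ne hj hj' hi hi' d1.symm,
    H.orth_ne hi hi' h1 h2 d2, H.orth_ne h1 h2 hi hi' d2.symm,
    H.orth_ne hi hi' hz hz' d3, H.orth_ne hz hz' hi hi' d3.symm,
    H.orth_ne hj hj' h1 h2 d4, H.orth_ne h1 h2 hj hj' d4.symm,
    H.orth_ne hj hj' hz hz' d5, H.orth_ne hz hz' hj hj' d5.symm,
    H.orth_ne h1 h2 hz hz' d6, H.orth_ne hz hz' h1 h2 d6.symm]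
  push_cast
  ring

lemma X_ne {i j : ℕ} (hX : ¬ q (m - 1) < i) (hj : 1 ≤ j) (hi : 1 ≤ i) (hb : bl m q j = bl m q i) : ¬ q (m - 1) < j := by
  rwa [H.X_iff hj hi hb]

lemma sh_ne {i j : ℕ} (hi : 1 ≤ i) (hi' : i ≤ n) (hj : 1 ≤ j) (hj' : j ≤ n) (hij : i ≠ j) :
    cs t • f i ≠ f i + f j := by
  intro h
  have := congrArg (fun v => (⟪v, f j⟫ : ℝ)) h
  simp only [inner_add_left, real_inner_smul_left] at this
  rw [H.orth_ne hi hi' hj hj' hij, H.orth_self hj hj'] at this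
  simp at this

lemma sum_ne {i j k : ℕ} (hk : 1 ≤ k) (hk' : k ≤ n) (hj : 1 ≤ j) (hj' : j ≤ n) (hij : k ≠ j) :
    f i + f k ≠ f i + f j := by
  intro h
  have h := add_left_cancel h
  have := congrArg (fun v => (⟪v, f j⟫ : ℝ)) h
  rw [H.orth_ne hk hk' hj hj' hij, H.orth_self hj hj'] at this
  simp at this

lemma sum_mem_PsiP {l : HStar V} {i j : ℕ} (hi : 1 ≤ i) (hi' : i ≤ n) (hj : 1 ≤ j) (hj' : j ≤ n) 
    (hij : i ≠ j) (hX : ¬ q (m - 1) < i) (hX' : j < i → ¬ q (m - 1) < j)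
    (hp : IsPosInt (l (f i) + l (f j))) :
    f i + f j ∈ PsiP S (PhiI S I) (S.Φ : Set V) l := by
  have hpos : f i + f j ∈ S.pos := by
    rw [H.pos]
    left
    rcases lt_or_gt_of_ne hij with h | h
    · exact ⟨i, j, hi, h, hj', Or.inr rfl⟩
    · exact ⟨j, i, hj, h, hi', Or.inr (add_comm _ _)⟩
  refine ⟨⟨S.pos_subset hpos, hpos⟩, ?_, ?_⟩
  · intro h
    rcases lt_or_gt_of_ne hij with h' | h'
    · exact hX (H.of_sum hi h' hj' h)
    · rw [add_comm] at h
      exact hX' h' (H.of_sum hj h' hi' h)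
  · rwa [H.coroot_sum hi hi' hj hj' hij, map_add]

lemma sh_mem_PsiP (ht : t ≠ BCD.D) {l : HStar V} {i : ℕ} (hi : 1 ≤ i) (hi' : i ≤ n) 
    (hX : ¬ q (m - 1) < i) (hp : IsPosInt ((2 / cs t : ℝ) * l (f i))) :
    cs t • f i ∈ PsiP S (PhiI S I) (S.Φ : Set V) l := by
  have hpos : cs t • f i ∈ S.pos := by
    rw [H.pos]
    exact Or.inr ⟨ht, i, hi, hi', rfl⟩
  refine ⟨⟨S.pos_subset hpos, hpos⟩, fun h => hX (H.of_sh hi hi' h), ?_⟩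
  rwa [H.coroot_sh hi hi', map_smul, Complex.real_smul]

variable {l : HStar V} (hl : l ∈ LambdaP (I : Set V))

lemma noneg {m' : HStar V} {β : V} (h : β ∈ EE S I l m') {i : ℕ} (hc : Cl t n m q f l i β) {k : ℕ}
    (hk : 1 ≤ k) (hk' : k ≤ n) (hb : bl m q k = bl m q i) : l (f k) ≠ - l (f i) := by
  have hreg := h.1.2
  obtain ⟨hi, hi', hX, h0, hc⟩ := hc
  intro he
  have hki : k ≠ i := by
    rintro rfl
    exact h0 (self_eq_neg.1 he)
  have hXk := H.X_ne hX hk hi hb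
  rcases hc with ⟨ht, rfl⟩ | ⟨j, hj, hj', hij, hbj, hj0, rfl⟩ | ⟨j, ε, hε, hij, hj, hXj, h1, rfl⟩
  · apply hreg _ (H.PhiI_diff' hi hi' hk hk' hki.symm hb.symm)
    rw [map_sub, H.sh_i hi hi', H.sh_k hi hi' l hk hk' hki, he, sub_self]
  · have hkj : k ≠ j := by
      rintro rfl
      rw [hj0] at he
      exact h0 (neg_eq_zero.1 he.symm)
    apply hreg _ (H.PhiI_diff' hj hj' hk hk' hkj.symm (hbj.trans hb.symm))
    have e1 := H.pair_j (ε := 1) (Or.inl rfl) hi hi' hj hj' hij.symm l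
    have e2 := H.pair_k (ε := 1) (Or.inl rfl) hi hi' hj hj' hij.symm l hk hk' hki hkj
    rw [one_smul] at e1 e2
    rw [map_sub, e1, e2, he]
    push_cast; ring
  · have hkj : k ≠ j := by
      rintro rfl
      exact hXk hXj
    apply hreg _ (H.PhiI_diff' hi hi' hk hk' hki.symm hb.symm)
    rw [map_sub, H.pair_i hε hi hi' (by omega) hj (by omega), 
      H.pair_k hε hi hi' (by omega) hj (by omega) l hk hk' hki hkj, he, ← h1]
    ring

lemma xprod_T3 {i j : ℕ} (hi : 1 ≤ i) (hi' : i ≤ n) (hj : 1 ≤ j) (hj' : j ≤ n) (hij : i ≠ j)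
    (hX : ¬ q (m - 1) < i) (hXj : ¬ q (m - 1) < j) :
    xprod n m q f (sRefl (f i + f j) l) = xprod n m q f l := by
  unfold xprod
  apply Finset.prod_congr rfl
  intro k hk
  simp only [Finset.mem_filter, Finset.mem_Icc] at hk
  have := H.pair_k (ε := 1) (Or.inl rfl) hi hi' hj hj' hij l hk.1.1 hk.1.2 
    (by rintro rfl; exact hX hk.2) (by rintro rfl; exact hXj hk.2)
  rwa [one_smul] at this

lemma xprod_T2 {i j : ℕ} {ε : ℝ} (hε : ε = 1 ∨ ε = -1) (hi : 1 ≤ i) (hij : i < j) (hj' : j ≤ n)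
    (hX : ¬ q (m - 1) < i) (hXj : q (m - 1) < j) (h1 : (ε : ℂ) * l (f j) = l (f i)) :
    xprod n m q f (sRefl (f i + ε • f j) l) = - xprod n m q f l := by
  unfold xprod
  have hmem : j ∈ (Finset.Icc 1 n).filter (fun k => q (m - 1) < k) := by
    simp only [Finset.mem_filter, Finset.mem_Icc]; omega
  rw [← Finset.mul_prod_erase _ _ hmem, ← Finset.mul_prod_erase _ _ hmem]
  have : ∀ k ∈ ((Finset.Icc 1 n).filter (fun k => q (m - 1) < k)).erase j,
      sRefl (f i + ε • f j) l (f k) = l (f k) := by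
    intro k hk
    simp only [Finset.mem_filter, Finset.mem_Icc, Finset.mem_erase] at hk
    exact H.pair_k hε hi (by omega) (by omega) hj' (by omega) l hk.2.1.1 hk.2.1.2
      (by rintro rfl; exact hX hk.2.2) hk.1
  rw [Finset.prod_congr rfl this, H.pair_j hε hi (by omega) (by omega) hj' (by omega), ← h1]
  rcases hε with rfl | rfl <;> push_cast <;> ring

include hl

lemma D3_uniq {i j k : ℕ} (h : D3 n m q f l i j) (h' : D3 n m q f l i k) : j = k :=
  H.reg1 hl h.1 h.2.1 h'.1 h'.2.1 (h.2.2.2.1.trans h'.2.2.2.1.symm)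
    (h.2.2.2.2.trans h'.2.2.2.2.symm)

lemma D2_uniq {i j k : ℕ} (h : D2 n m q f l i j) (h' : D2 n m q f l i k) : j = k :=
  H.reg1 hl (by have := h.1; omega) h.2.1 (by have := h'.1; omega) h'.2.1 (H.bl_X h.2.2.1 h'.2.2.1)
    (h.2.2.2.trans h'.2.2.2.symm)

/-- in types B and C -/
lemma posT4 (ht : t ≠ BCD.D) {β : V} (h : β ∈ PsiP S (PhiI S I) (S.Φ : Set V) l) {i : ℕ}
    (hc : Cl t n m q f l i β) : IsPosInt ((2 / cs t : ℝ) * l (f i)) := by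
  obtain ⟨_, _, h3⟩ := h
  obtain ⟨hi, hi', hX, h0, ⟨_, rfl⟩ | ⟨j, hj, hj', hij, hbj, hj0, rfl⟩ |
    ⟨j, ε, hε, hij, hj, hXj, h1, rfl⟩⟩ := hc
  · rwa [H.coroot_sh hi hi', map_smul, Complex.real_smul] at h3
  · rw [H.coroot_sum hi hi' hj hj' hij.symm, map_add, hj0, add_zero] at h3
    obtain ⟨k, hk, e⟩ := h3
    rw [e]
    cases t
    · exact ⟨2 * k, by omega, by simp [cs]⟩
    · exact ⟨k, hk, by simp [cs]⟩
    · exact (ht rfl).elim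
  · rw [H.coroot_pair hε hi hi' (by omega) hj (by omega), map_add, map_smul, Complex.real_smul,
      h1] at h3
    have h4 := H.dom_sh hl ht (by omega) hj hXj
    cases t
    · convert h3 using 1
      simp [cs]; ring
    · obtain ⟨k, hk, e⟩ := h4
      obtain ⟨k', hk', e'⟩ := h3
      simp only [cs] at e ⊢
      norm_num at e ⊢
      rcases hε with rfl | rfl
      · exact ⟨k, hk, by rw [← h1, e]; simp⟩
      · exfalso
        rw [e] at h1
        rw [← h1] at e'
        have : ((-1 : ℝ) : ℂ) * k + ((-1 : ℝ) : ℂ) * k = ((-2 * k : ℤ) : ℂ) := by push_cast; ring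
        rw [this] at e'
        have := Int.cast_injective e'
        omega
    · exact (ht rfl).elim

lemma posT3 (ht : t ≠ BCD.D) {i j : ℕ} (hi : 1 ≤ i) (hi' : i ≤ n) (h : D3 n m q f l i j)
    (hp : IsPosInt ((2 / cs t : ℝ) * l (f i))) : IsPosInt (l (f i)) ∧ i < j := by
  obtain ⟨hj, hj', hij, hb, h0⟩ := h
  rcases lt_or_gt_of_ne hij with h | h
  · exfalso
    have := H.dom1 hl hj h hi' hb
    obtain ⟨k, hk, e⟩ := this
    obtain ⟨k', hk', e'⟩ := hp
    have e : l (f i) = - k := by rw [← e, h0]; ring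
    rw [e] at e'
    cases t
    · simp [cs] at e'
      have : ((-(2 * k) : ℤ) : ℂ) = (k' : ℂ) := by push_cast; exact e'
      have := Int.cast_injective this
      omega
    · simp [cs] at e'
      have : ((-k : ℤ) : ℂ) = (k' : ℂ) := by push_cast; exact e'
      have := Int.cast_injective this
      omega
    · exact (ht rfl).elim
  · have := H.dom1 hl hi h hj' hb.symm
    rw [h0, sub_zero] at this
    exact ⟨this, h⟩

lemma formsBC (ht : t ≠ BCD.D) {β : V} (h : β ∈ PsiP S (PhiI S I) (S.Φ : Set V) l) {i : ℕ}
    (hc : Cl t n m q f l i β) : β = cs t • f i ∨ (∃ j, D3 n m q f l i j ∧ β = f i + f j) ∨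
      (∃ j, D2 n m q f l i j ∧ β = f i + f j) := by
  have hp := H.posT4 hl ht h hc
  obtain ⟨hi, hi', hX, h0, ⟨_, rfl⟩ | ⟨j, hj, hj', hij, hbj, hj0, rfl⟩ |
    ⟨j, ε, hε, hij, hj, hXj, h1, rfl⟩⟩ := hc
  · exact Or.inl rfl
  · exact Or.inr (Or.inl ⟨j, ⟨hj, hj', hij, hbj, hj0⟩, rfl⟩)
  · right; right
    rcases hε with rfl | rfl
    · exact ⟨j, ⟨hij, hj, hXj, by simpa using h1⟩, by simp⟩
    · exfalso
      refine (H.dom_sh hl ht (by omega) hj hXj).neg_false ?_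
      rw [← h1] at hp
      convert hp using 1
      push_cast; ring

lemma coreBC (ht : t ≠ BCD.D) {m' : HStar V} {β : V} (h : β ∈ EE S I l m') {i : ℕ}
    (hc : Cl t n m q f l i β) : jc S (PhiI S I) (S.Φ : Set V) l m' = 0 ↔
      ((∃ j, D3 n m q f l i j) ∧ ¬ ∃ j, D2 n m q f l i j) ∨
      ((∃ j, D2 n m q f l i j) ∧ ¬ ∃ j, D3 n m q f l i j) := by
  have hp := H.posT4 hl ht h.1.1 hc
  have hall : ∀ β' ∈ EE S I l m', β' = cs t • f i ∨ (∃ j, D3 n m q f l i j ∧ β' = f i + f j) ∨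
      (∃ j, D2 n m q f l i j ∧ β' = f i + f j) := fun β' h' => 
    H.formsBC hl ht h'.1.1 (H.Cl_EE hl h h' hc)
  obtain ⟨hi, hi', hX, h0, _⟩ := hc
  have P4 := H.sh_mem_PsiP ht hi hi' hX hp
  have M4 : cs t • f i ∈ EE S I l m' := by
    rcases hall β h with rfl | ⟨j, hj, rfl⟩ | ⟨j, hj, rfl⟩
    · exact h
    · exact EE_link' S I h P4 (H.PhiI_diff' hi hi' hj.1 hj.2.1 hj.2.2.1.symm hj.2.2.2.1.symm)
        (H.link3 hi hi' hj.1 hj.2.1 hj.2.2.1.symm hj.2.2.2.2)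
    · have := hj.1
      exact EE_link' S I h P4 (H.PhiI_sh ht (by omega) hj.2.1 hj.2.2.1)
        (H.link2 hi hi' (by omega) hj.2.1 hj.1.ne hj.2.2.2)
  have M3 : ∀ j, D3 n m q f l i j → f i + f j ∈ EE S I l m' ∧ 
      PI S I (sRefl (f i + f j) l) = - PI S I (sRefl (cs t • f i) l) := by
    intro j hj
    have hα := H.PhiI_diff' hi hi' hj.1 hj.2.1 hj.2.2.1.symm hj.2.2.2.1.symm
    have hk := H.link3 hi hi' hj.1 hj.2.1 hj.2.2.1.symm hj.2.2.2.2
    refine ⟨EE_link S I M4 (H.sum_mem_PsiP hi hi' hj.1 hj.2.1 hj.2.2.1.symm hX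
      (fun _ => H.X_ne hX hj.1 hi hj.2.2.2.1) ?_) hα hk, ?_⟩
    · rw [hj.2.2.2.2, add_zero]
      exact (H.posT3 hl ht hi hi' hj hp).1
    · rw [hk, PI_sRefl S I hα]
  have M2 : ∀ j, D2 n m q f l i j → f i + f j ∈ EE S I l m' ∧ 
      PI S I (sRefl (f i + f j) l) = - PI S I (sRefl (cs t • f i) l) := by
    intro j hj
    have := hj.1
    have hα := H.PhiI_sh ht (by omega) hj.2.1 hj.2.2.1
    have hk := H.link2 hi hi' (by omega) hj.2.1 hj.1.ne hj.2.2.2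
    refine ⟨EE_link S I M4 (H.sum_mem_PsiP hi hi' (by omega) hj.2.1 hj.1.ne hX
      (fun _ => by omega) ?_) hα hk, ?_⟩
    · rw [hj.2.2.2]
      obtain ⟨k, hk0, e⟩ := hp
      cases t
      · refine ⟨k, hk0, ?_⟩
        rw [← e]; simp [cs]; ring
      · refine ⟨2 * k, by omega, ?_⟩
        push_cast
        rw [← e]; simp [cs]; ring
      · exact (ht rfl).elim
    · rw [hk, PI_sRefl S I hα]
  by_cases h3 : ∃ j, D3 n m q f l i j <;> by_cases h2 : ∃ j, D2 n m q f l i j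
  · simp only [h3, h2, not_true, and_false, or_self, iff_false]
    obtain ⟨j, hj⟩ := h3
    obtain ⟨k, hk⟩ := h2
    have := hk.1
    refine jc_three S I (a := cs t • f i) (b := f i + f j) (c := f i + f k)
      (H.sh_ne hi hi' hj.1 hj.2.1 hj.2.2.1.symm) (H.sh_ne hi hi' (by omega) hk.2.1 hk.1.ne)
      (H.sum_ne hj.1 hj.2.1 (by omega) hk.2.1 ?_) ?_
    · rintro rfl
      exact H.X_ne hX hj.1 hi hj.2.2.2.1 hk.2.2.1
    · ext b
      simp only [Set.mem_insert_iff, Set.mem_singleton_iff]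
      constructor
      · intro hb
        rcases hall b hb with rfl | ⟨j', hj', rfl⟩ | ⟨j', hj', rfl⟩
        · exact Or.inl rfl
        · rw [H.D3_uniq hl hj' hj]; exact Or.inr (Or.inl rfl)
        · rw [H.D2_uniq hl hj' hk]; exact Or.inr (Or.inr rfl)
      · rintro (rfl | rfl | rfl)
        · exact M4
        · exact (M3 j hj).1
        · exact (M2 k hk).1
  · simp only [h3, h2, not_false_eq_true, and_true, true_or, iff_true]
    obtain ⟨j, hj⟩ := h3
    refine jc_two S I (a := cs t • f i) (b := f i + f j) 
      (H.sh_ne hi hi' hj.1 hj.2.1 hj.2.2.1.symm) ?_ (M3 j hj).2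
    ext b
    simp only [Set.mem_insert_iff, Set.mem_singleton_iff]
    constructor
    · intro hb
      rcases hall b hb with rfl | ⟨j', hj', rfl⟩ | ⟨j', hj', rfl⟩
      · exact Or.inl rfl
      · rw [H.D3_uniq hl hj' hj]; exact Or.inr rfl
      · exact (h2 ⟨_, hj'⟩).elim
    · rintro (rfl | rfl)
      · exact M4
      · exact (M3 j hj).1
  · simp only [h3, h2, not_false_eq_true, and_true, or_true, iff_true]
    obtain ⟨j, hj⟩ := h2
    have := hj.1
    refine jc_two S I (a := cs t • f i) (b := f i + f j) 
      (H.sh_ne hi hi' (by omega) hj.2.1 hj.1.ne) ?_ (M2 j hj).2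
    ext b
    simp only [Set.mem_insert_iff, Set.mem_singleton_iff]
    constructor
    · intro hb
      rcases hall b hb with rfl | ⟨j', hj', rfl⟩ | ⟨j', hj', rfl⟩
      · exact Or.inl rfl
      · exact (h3 ⟨_, hj'⟩).elim
      · rw [H.D2_uniq hl hj' hj]; exact Or.inr rfl
    · rintro (rfl | rfl)
      · exact M4
      · exact (M2 j hj).1
  · simp only [h3, h2, false_and, or_self, iff_false]
    refine jc_one S I (β := cs t • f i) ?_
    ext b
    simp only [Set.mem_singleton_iff]
    constructor
    · intro hb
      rcases hall b hb with rfl | ⟨j', hj', rfl⟩ | ⟨j', hj', rfl⟩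
      · rfl
      · exact (h3 ⟨_, hj'⟩).elim
      · exact (h2 ⟨_, hj'⟩).elim
    · rintro rfl
      exact M4

/-- a zero in the last block sits in the last position -/
lemma zero_last {z : ℕ} (hz : 1 ≤ z) (hz' : z ≤ n) (hX : q (m - 1) < z) (h0 : l (f z) = 0) :
    z = n := by
  by_contra hne
  have h1 := H.dom1 hl hz (by omega : z < n) le_rfl (H.bl_X hX (by omega))
  have h2 := H.dom2 hl hz (by omega : z < n) le_rfl hX
  refine (h1.add h2).ne ?_
  rw [h0]; ring

lemma D_aux {m' : HStar V} (ht : t = BCD.D) {i j k : ℕ} {ε : ℝ} 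
    (hi : 1 ≤ i) (hi' : i ≤ n) (hX : ¬ q (m - 1) < i) 
    (h3 : D3 n m q f l i j) (hε : ε = 1 ∨ ε = -1) (hik : i < k) (hk' : k ≤ n)
    (hXk : q (m - 1) < k) (h1 : (ε : ℂ) * l (f k) = l (f i)) (h0 : l (f i) ≠ 0)
    (ha : f i + f j ∈ EE S I l m') (hb : f i + ε • f k ∈ EE S I l m') :
    D2 n m q f l i k ∧ ∃ z, 1 ≤ z ∧ z ≤ n ∧ q (m - 1) < z ∧ l (f z) = 0 := by
  have hx := H.xprod_EE ht ha hb
  rw [H.xprod_T3 hi hi' h3.1 h3.2.1 h3.2.2.1.symm hX (H.X_ne hX h3.1 hi h3.2.2.2.1),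
    H.xprod_T2 hε hi hik hk' hX hXk h1] at hx
  have hx := self_eq_neg.1 hx
  unfold xprod at hx
  obtain ⟨z, hz, hz0⟩ := Finset.prod_eq_zero_iff.1 hx
  simp only [Finset.mem_filter, Finset.mem_Icc] at hz
  have hzn := H.zero_last hl hz.1.1 hz.1.2 hz.2 hz0
  have hkn : k ≠ z := by
    rintro rfl
    rw [hz0, mul_zero] at h1
    exact h0 h1.symm
  have hd := H.dom1 hl (by omega) (by omega : k < z) hz.1.2 (H.bl_X hXk hz.2)
  rw [hz0, sub_zero] at hd
  refine ⟨⟨hik, hk', hXk, ?_⟩, z, hz.1.1, hz.1.2, hz.2, hz0⟩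
  rcases hε with rfl | rfl
  · simpa using h1
  · exfalso
    have hp := ha.1.1.2.2
    rw [H.coroot_sum hi hi' h3.1 h3.2.1 h3.2.2.1.symm, map_add, h3.2.2.2.2, add_zero, ← h1] at hp
    exact hd.neg_false (by simpa using hp)

lemma coreD (ht : t = BCD.D) {m' : HStar V} {β : V} (h : β ∈ EE S I l m') {i : ℕ}
    (hc : Cl t n m q f l i β) : jc S (PhiI S I) (S.Φ : Set V) l m' = 0 ↔
      ∃ j k, D3 n m q f l i j ∧ D2 n m q f l i k ∧ 
        ∃ z, 1 ≤ z ∧ z ≤ n ∧ q (m - 1) < z ∧ l (f z) = 0 := by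
  have hforms : ∀ β' ∈ EE S I l m', (∃ j, D3 n m q f l i j ∧ β' = f i + f j) ∨
      (∃ j, ∃ ε : ℝ, (ε = 1 ∨ ε = -1) ∧ i < j ∧ j ≤ n ∧ q (m - 1) < j ∧
     (ε : ℂ) * l (f j) = l (f i) ∧ β' = f i + ε • f j) := by
    intro β' h'
    obtain ⟨hi, hi', hX, h0, ⟨ht', rfl⟩ | ⟨j, hj, hj', hij, hbj, hj0, rfl⟩ | h2⟩ :=
      H.Cl_EE hl h h' hc
    · exact (ht' ht).elim
    · exact Or.inl ⟨j, ⟨hj, hj', hij, hbj, hj0⟩, rfl⟩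
    · exact Or.inr h2
  obtain ⟨hi, hi', hX, h0, _⟩ := hc
  have huniq : ∀ j k : ℕ, ∀ ε ε' : ℝ, (ε = 1 ∨ ε = -1) → (ε' = 1 ∨ ε' = -1) → 
      i < j → j ≤ n → q (m - 1) < j → i < k → k ≤ n → q (m - 1) < k → 
      (ε : ℂ) * l (f j) = l (f i) → (ε' : ℂ) * l (f k) = l (f i) → j = k ∧ ε = ε' := by
    intro j k ε ε' hε hε' a1 a2 a3 b1 b2 b3 e e'
    have hb := H.bl_X a3 b3
    rcases hε with rfl | rfl <;> rcases hε' with rfl | rfl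
    · exact ⟨H.reg1 hl (by omega) a2 (by omega) b2 hb (by
        push_cast at e e'; linear_combination e - e'), rfl⟩
    · exfalso
      have hjk := H.reg2 hl (by omega) a2 (by omega) b2 a3 b3 (by
        push_cast at e e'; linear_combination e - e')
      subst hjk
      apply h0
      push_cast at e e'; linear_combination (-1/2) * e - (1/2) * e'
    · exfalso
      have hjk := H.reg2 hl (by omega) a2 (by omega) b2 a3 b3 (by
        push_cast at e e'; linear_combination e' - e)
      subst hjk
      apply h0
      push_cast at e e'; linear_combination (-1/2) * e - (1/2) * e'
    · exact ⟨H.reg1 hl (by omega) a2 (by omega) b2 hb (by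
        push_cast at e e'; linear_combination e' - e), rfl⟩
  constructor
  · intro hjc
    have : ∃ β' ∈ EE S I l m', β' ≠ β := by
      by_contra hno
      push Not at hno
      refine jc_one S I (β := β) ?_ hjc
      ext b
      simp only [Set.mem_singleton_iff]
      exact ⟨fun hb => hno b hb, by rintro rfl; exact h⟩
    obtain ⟨β', h', hne⟩ := this
    rcases hforms β h with ⟨j, hj, rfl⟩ | ⟨k, ε, hε, a1, a2, a3, a4, rfl⟩ <;>
    rcases hforms β' h' with ⟨j', hj', rfl⟩ | ⟨k', ε', hε', b1, b2, b3, b4, rfl⟩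
    · exact (hne (by rw [H.D3_uniq hl hj hj'])).elim
    · have := H.D_aux hl ht hi hi' hX hj hε' b1 b2 b3 b4 h0 h h'
      exact ⟨j, k', hj, this⟩
    · have := H.D_aux hl ht hi hi' hX hj' hε a1 a2 a3 a4 h0 h' h
      exact ⟨j', k, hj', this⟩
    · obtain ⟨rfl, rfl⟩ := huniq _ _ _ _ hε hε' a1 a2 a3 b1 b2 b3 a4 b4
      exact (hne rfl).elim
  · rintro ⟨j, k, hj, hk, z, hz, hz', hzX, hz0⟩
    have hik := hk.1
    have hXj := H.X_ne hX hj.1 hi hj.2.2.2.1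
    have hzn := H.zero_last hl hz hz' hzX hz0
    have hkz : k ≠ z := by
      rintro rfl
      exact h0 (hk.2.2.2.symm.trans hz0)
    have hkz' : k < z := by have := hk.2.1; omega
    have hu := H.dom1 hl (by omega) hkz' hz' (H.bl_X hk.2.2.1 hzX)
    rw [hz0, sub_zero, hk.2.2.2] at hu
    have P3 := H.sum_mem_PsiP hi hi' hj.1 hj.2.1 hj.2.2.1.symm hX (fun _ => hXj) 
      (by rwa [hj.2.2.2.2, add_zero])
    have P2 := H.sum_mem_PsiP hi hi' (by omega) hk.2.1 hk.1.ne hX (fun _ => by omega) 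
      (by rw [hk.2.2.2]; exact hu.add hu)
    have A1 := H.PhiI_diff' hi hi' hj.1 hj.2.1 hj.2.2.1.symm hj.2.2.2.1.symm
    have A2 := H.PhiI_diff (by omega) hkz' hz' (H.bl_X hk.2.2.1 hzX)
    have A3 := H.PhiI_sum (by omega) hkz' hz' hk.2.2.1
    have hlink := H.linkD hi hi' (by omega) hk.2.1 hz hz' hj.1 hj.2.1 hk.1.ne hj.2.2.1.symm
      (by rintro rfl; exact hX hzX) (by rintro rfl; exact hXj hk.2.2.1) hkz
      (by rintro rfl; exact hXj hzX) hk.2.2.2 hj.2.2.2.2 hz0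
    have hkj : j ≠ k := by rintro rfl; exact hXj hk.2.2.1
    have hw : sRefl (f i + f k) l = wAct (reflV (f k + f z) * (reflV (f k - f z) * 
        reflV (f i - f j))) (sRefl (f i + f j) l) := by
      rw [wAct_mul', wAct_mul', wAct_reflV (PhiI_ne S I A1), wAct_reflV (PhiI_ne S I A2),
        wAct_reflV (PhiI_ne S I A3), hlink]
    have hwm : (reflV (f k + f z) * (reflV (f k - f z) * reflV (f i - f j))) ∈ weyl (PhiI S I) :=
      mul_mem (weyl_refl_mem S I A3) (mul_mem (weyl_refl_mem S I A2) (weyl_refl_mem S I A1))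
    have hw' : sRefl (f i + f j) l = wAct (reflV (f k + f z) * (reflV (f k - f z) * 
        reflV (f i - f j)))⁻¹ (sRefl (f i + f k) l) := by
      rw [hw, ← wAct_mul', inv_mul_cancel, wAct_one']
    have hM : f i + f j ∈ EE S I l m' ∧ f i + f k ∈ EE S I l m' := by
      rcases hforms β h with ⟨j', hj', rfl⟩ | ⟨k', ε, hε, a1, a2, a3, a4, rfl⟩
      · rw [H.D3_uniq hl hj' hj] at h
        exact ⟨h, EE_of_link S I h P2 hwm hw⟩
      · obtain ⟨rfl, rfl⟩ := huniq _ _ ε 1 hε (Or.inl rfl) a1 a2 a3 hk.1 hk.2.1 hk.2.2.1 a4 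
          (by rw [← hk.2.2.2]; simp)
        rw [one_smul] at h
        exact ⟨EE_of_link S I h P3 (inv_mem hwm) hw', h⟩
    refine jc_two S I (a := f i + f j) (b := f i + f k) 
      (H.sum_ne hj.1 hj.2.1 (by omega) hk.2.1 hkj) ?_ ?_
    · ext b
      simp only [Set.mem_insert_iff, Set.mem_singleton_iff]
      constructor
      · intro hb
        rcases hforms b hb with ⟨j', hj', rfl⟩ | ⟨k', ε, hε, a1, a2, a3, a4, rfl⟩
        · rw [H.D3_uniq hl hj' hj]; exact Or.inl rfl
        · obtain ⟨rfl, rfl⟩ := huniq _ _ ε 1 hε (Or.inl rfl) a1 a2 a3 hk.1 hk.2.1 hk.2.2.1 a4 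
            (by rw [← hk.2.2.2]; simp)
          rw [one_smul]; exact Or.inr rfl
      · rintro (rfl | rfl)
        · exact hM.1
        · exact hM.2
    · rw [hlink, PI_sRefl S I A3, PI_sRefl S I A2, PI_sRefl S I A1]
      ring

lemma exists_Cl {m' : HStar V} {β : V} (h : β ∈ EE S I l m')
    (hjc : jc S (PhiI S I) (S.Φ : Set V) l m' = 0) : ∃ i, Cl t n m q f l i β := by
  by_contra hno
  refine jc_one S I (β := β) ?_ hjc
  ext b
  simp only [Set.mem_singleton_iff]
  constructor
  · intro hb
    rcases H.key_pair hl h hb with rfl | ⟨i, hi, _⟩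
    · rfl
    · exact (hno ⟨i, hi⟩).elim
  · rintro rfl; exact h

end Setup
end Part5

section Part6
variable {V : Type*} [NormedAddCommGroup V] [InnerProductSpace ℝ V] [FiniteDimensional ℝ V]

/-- the three vanishing conditions, in an arbitrary orthonormal basis -/
def C1 (t : BCD) (n m : ℕ) (q : ℕ → ℕ) (f : ℕ → V) (lam : HStar V) (β : V) : Prop :=
  ∃ i j s : ℕ, 1 ≤ s ∧ s < m ∧ q (s - 1) < i ∧ i ≤ q s ∧ q s ≤ q (m - 1) ∧
        q (m - 1) < j ∧ j ≤ n ∧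
        ((t = BCD.B ∧ (β = f i ∨ β = f i + f j) ∧
            (∃ k : ℤ, 0 < k ∧ lam (f i) = (k : ℂ) / 2)) ∨
         (t = BCD.C ∧ (β = (2 : ℝ) • f i ∨ β = f i + f j) ∧
            (∃ k : ℤ, 0 < k ∧ lam (f i) = (k : ℂ)))) ∧
        lam (f j) = lam (f i) ∧
        (∀ k : ℕ, q (s - 1) < k → k ≤ q s →
          lam (f k) ≠ 0 ∧ lam (f k) ≠ -lam (f i))

def C2 (t : BCD) (n m : ℕ) (q : ℕ → ℕ) (f : ℕ → V) (lam : HStar V) (β : V) : Prop :=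
  ∃ i j s : ℕ, 1 ≤ s ∧ s < m ∧ q (s - 1) < i ∧ i < j ∧ j ≤ q s ∧
        ((t = BCD.B ∧ (β = f i ∨ β = f i + f j)) ∨
         (t = BCD.C ∧ (β = (2 : ℝ) • f i ∨ β = f i + f j))) ∧
        (∃ k : ℤ, 0 < k ∧ lam (f i) = (k : ℂ)) ∧
        lam (f j) = 0 ∧
        (∀ k : ℕ, q (s - 1) < k → k ≤ q s → lam (f k) ≠ -lam (f i)) ∧
        (∀ l : ℕ, q (m - 1) < l → l ≤ n → lam (f l) ≠ lam (f i))

def C3 (t : BCD) (n m : ℕ) (q : ℕ → ℕ) (f : ℕ → V) (lam : HStar V) (β : V) : Prop :=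
  t = BCD.D ∧ ∃ i j k s : ℕ, 1 ≤ s ∧ s < m ∧ q (s - 1) < i ∧ i < j ∧ j ≤ q s ∧
        q s ≤ q (m - 1) ∧ q (m - 1) < k ∧ k < n ∧
        (β = f i + f j ∨ β = f i + f k) ∧
        lam (f k) = lam (f i) ∧
        (∃ z : ℤ, 0 < z ∧ lam (f i) = (z : ℂ)) ∧
        lam (f j) = 0 ∧ lam (f n) = 0 ∧
        (∀ l : ℕ, q (s - 1) < l → l ≤ q s → lam (f l) ≠ -lam (f i))

namespace Setup
variable {S : RootSys V} {I : Finset V} {t : BCD} {n m : ℕ} {q : ℕ → ℕ} {f : ℕ → V}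
  (H : Setup S I t n m q f) {l : HStar V} 
include H

lemma shape (ht : t ≠ BCD.D) {β : V} {i j : ℕ} (h : β = cs t • f i ∨ β = f i + f j) :
    (t = BCD.B ∧ (β = f i ∨ β = f i + f j)) ∨
         (t = BCD.C ∧ (β = (2 : ℝ) • f i ∨ β = f i + f j)) := by
  cases t
  · left; simpa [cs] using h
  · right; simpa [cs] using h
  · exact (ht rfl).elim

lemma shape' {β : V} {i j : ℕ} (h : (t = BCD.B ∧ (β = f i ∨ β = f i + f j)) ∨
         (t = BCD.C ∧ (β = (2 : ℝ) • f i ∨ β = f i + f j))) : 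
    t ≠ BCD.D ∧ (β = cs t • f i ∨ β = f i + f j) := by
  rcases h with ⟨rfl, h⟩ | ⟨rfl, h⟩
  · exact ⟨by simp, by simpa [cs] using h⟩
  · exact ⟨by simp, by simpa [cs] using h⟩

variable (hl : l ∈ LambdaP (I : Set V))
include hl

lemma final {m' : HStar V} {β : V} (h : β ∈ EE S I l m') :
    jc S (PhiI S I) (S.Φ : Set V) l m' = 0 ↔
      C1 t n m q f l β ∨ C2 t n m q f l β ∨ C3 t n m q f l β := by
  constructor
  · intro hjc
    obtain ⟨i, hc⟩ := H.exists_Cl hl h hjc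
    have hc' := hc
    obtain ⟨hi, hi', hX, h0, _⟩ := hc'
    obtain ⟨s, hs1, hs2, hs3, hs4⟩ := H.exists_block hi hX
    have hqs := H.qmono hs2 le_rfl
    have hqn := H.hqn
    have hbi := H.bl_of_block hs1 hs2 hs3 hs4
    have hblk : ∀ k, q (s - 1) < k → k ≤ q s → bl m q k = bl m q i := fun k h1 h2 => by
      rw [H.bl_of_block hs1 hs2 h1 h2, hbi]
    have hneg : ∀ k, q (s - 1) < k → k ≤ q s → l (f k) ≠ - l (f i) := fun k h1 h2 =>
      H.noneg h hc (by omega) (by omega) (hblk k h1 h2)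
    by_cases ht : t = BCD.D
    · right; right
      obtain ⟨j, k, hj, hk, z, hz, hz', hzX, hz0⟩ := (H.coreD hl ht h hc).1 hjc
      have hzn := H.zero_last hl hz hz' hzX hz0
      have hik := hk.1
      have hkn := hk.2.1
      have hkz : k ≠ z := by
        rintro rfl
        exact h0 (hk.2.2.2.symm.trans hz0)
      have hu := H.dom1 hl (by omega) (by omega : k < z) hz' (H.bl_X hk.2.2.1 hzX)
      rw [hz0, sub_zero, hk.2.2.2] at hu
      have hjs := (H.block_iff hj.1 hs1 hs2).2 (hj.2.2.2.1.trans hbi)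
      have hij : i < j := by
        by_contra hno
        have h1 := H.dom1 hl hj.1 (lt_of_le_of_ne (by omega) hj.2.2.1) hi' hj.2.2.2.1
        rw [hj.2.2.2.2, zero_sub] at h1
        exact hu.neg_false h1
      refine ⟨ht, i, j, k, s, hs1, by omega, hs3, hij, hjs.2, hqs, hk.2.2.1, by omega, ?_,
        hk.2.2.2, hu, hj.2.2.2.2, hzn ▸ hz0, hneg⟩
      obtain ⟨_, _, _, _, ⟨ht', rfl⟩ | ⟨j', b1, b2, b3, b4, b5, rfl⟩ | 
        ⟨k', ε, hε, a1, a2, a3, a4, rfl⟩⟩ := hc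
      · exact (ht' ht).elim
      · left
        rw [H.D3_uniq hl ⟨b1, b2, b3, b4, b5⟩ hj]
      · right
        rcases hε with rfl | rfl
        · rw [H.D2_uniq hl ⟨a1, a2, a3, by simpa using a4⟩ hk, one_smul]
        · exfalso
          rw [← hk.2.2.2] at a4
          have := H.reg2 hl (by omega) a2 (by omega) hkn a3 hk.2.2.1 
            (by push_cast at a4; linear_combination -a4)
          subst this
          apply h0
          rw [← hk.2.2.2]
          push_cast at a4
          linear_combination (-1/2) * a4
    · have hp := H.posT4 hl ht h.1.1 hc
      have hf := H.formsBC hl ht h.1.1 hc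
      rcases (H.coreBC hl ht h hc).1 hjc with ⟨⟨j, hj⟩, h2⟩ | ⟨⟨j, hj⟩, h3⟩
      · right; left
        have hjs := (H.block_iff hj.1 hs1 hs2).2 (hj.2.2.2.1.trans hbi)
        have hu := H.posT3 hl ht hi hi' hj hp
        refine ⟨i, j, s, hs1, by omega, hs3, hu.2, hjs.2, H.shape ht ?_, hu.1, hj.2.2.2.2, hneg, ?_⟩
        · rcases hf with hf | ⟨j', hj', hf⟩ | ⟨j', hj', hf⟩
          · exact Or.inl hf
          · rw [H.D3_uniq hl hj' hj] at hf
            exact Or.inr hf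
          · exact (h2 ⟨_, hj'⟩).elim
        · intro k hk hk' he
          exact h2 ⟨k, by omega, hk', hk, he⟩
      · left
        refine ⟨i, j, s, hs1, by omega, hs3, hs4, hqs, hj.2.2.1, hj.2.1, ?_, hj.2.2.2, ?_⟩
        · have hf' : β = cs t • f i ∨ β = f i + f j := by
            rcases hf with hf | ⟨j', hj', hf⟩ | ⟨j', hj', hf⟩
            · exact Or.inl hf
            · exact (h3 ⟨_, hj'⟩).elim
            · rw [H.D2_uniq hl hj' hj] at hf
              exact Or.inr hf
          obtain ⟨k, hk, e⟩ := hp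
          rcases H.shape ht hf' with ⟨rfl, h5⟩ | ⟨rfl, h5⟩
          · refine Or.inl ⟨rfl, h5, k, hk, ?_⟩
            rw [← e]; simp [cs]
          · refine Or.inr ⟨rfl, h5, k, hk, ?_⟩
            rw [← e]; simp [cs]
        · intro k hk hk'
          refine ⟨?_, hneg k hk hk'⟩
          intro he
          apply h3
          refine ⟨k, by omega, by omega, ?_, hblk k hk hk', he⟩
          rintro rfl
          exact h0 he
  · rintro (⟨i, j, s, hs1, hs2, hs3, hs4, hqs, hXj, hj, hsh, he, hall⟩ | 
      ⟨i, j, s, hs1, hs2, hs3, hij, hjs, hsh, hu, hj0, hneg, hno⟩ | 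
      ⟨ht, i, j, k, s, hs1, hs2, hs3, hij, hjs, hqs, hXk, hkn, hsh, he, hu, hj0, hn0, hneg⟩)
    · have hqn := H.hqn
      have h0 : l (f i) ≠ 0 := (hall i hs3 hs4).1
      have hX : ¬ q (m - 1) < i := by omega
      obtain ⟨ht, hs⟩ := H.shape' (β := β) (i := i) (j := j) (by tauto)
      have hd2 : D2 n m q f l i j := ⟨by omega, hj, hXj, he⟩
      have hc : Cl t n m q f l i β := by
        refine ⟨by omega, by omega, hX, h0, ?_⟩
        rcases hs with rfl | rfl
        · exact Or.inl ⟨ht, rfl⟩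
        · exact Or.inr (Or.inr ⟨j, 1, Or.inl rfl, by omega, hj, hXj, by simpa using he, by simp⟩)
      refine (H.coreBC hl ht h hc).2 (Or.inr ⟨⟨j, hd2⟩, ?_⟩)
      rintro ⟨k, hk⟩
      have := (H.block_iff hk.1 hs1 (by omega)).2 
        (hk.2.2.2.1.trans (H.bl_of_block hs1 (by omega) hs3 hs4))
      exact (hall k this.1 this.2).1 hk.2.2.2.2
    · have hqn := H.hqn
      have hqs := H.qmono (s := s) (s' := m - 1) (by omega) le_rfl
      have h0 : l (f i) ≠ 0 := IsPosInt.ne hu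
      have hX : ¬ q (m - 1) < i := by omega
      obtain ⟨ht, hs⟩ := H.shape' hsh
      have hbb : bl m q j = bl m q i := by
        rw [H.bl_of_block hs1 (by omega) hs3 (by omega), 
          H.bl_of_block hs1 (by omega) (by omega) hjs]
      have hd3 : D3 n m q f l i j := ⟨by omega, by omega, by omega, hbb, hj0⟩
      have hc : Cl t n m q f l i β := by
        refine ⟨by omega, by omega, hX, h0, ?_⟩
        rcases hs with rfl | rfl
        · exact Or.inl ⟨ht, rfl⟩
        · exact Or.inr (Or.inl ⟨j, by omega, by omega, by omega, hbb, hj0, rfl⟩)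
      refine (H.coreBC hl ht h hc).2 (Or.inl ⟨⟨j, hd3⟩, ?_⟩)
      rintro ⟨k, hk⟩
      exact hno k hk.2.2.1 hk.2.1 hk.2.2.2
    · have hqn := H.hqn
      have h0 : l (f i) ≠ 0 := IsPosInt.ne hu
      have hX : ¬ q (m - 1) < i := by omega
      have hbb : bl m q j = bl m q i := by
        rw [H.bl_of_block hs1 (by omega) hs3 (by omega), 
          H.bl_of_block hs1 (by omega) (by omega) hjs]
      have hd3 : D3 n m q f l i j := ⟨by omega, by omega, by omega, hbb, hj0⟩
      have hd2 : D2 n m q f l i k := ⟨by omega, by omega, hXk, he⟩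
      have hc : Cl t n m q f l i β := by
        refine ⟨by omega, by omega, hX, h0, ?_⟩
        rcases hsh with rfl | rfl
        · exact Or.inr (Or.inl ⟨j, by omega, by omega, by omega, hbb, hj0, rfl⟩)
        · exact Or.inr (Or.inr ⟨k, 1, Or.inl rfl, by omega, by omega, hXk, by simpa using he, 
            by simp⟩)
      exact (H.coreD hl ht h hc).2 ⟨j, k, hd3, hd2, n, H.hn, le_rfl, by omega, hn0⟩

end Setup

lemma stdE_inner {n i j : ℕ} (h1 : 1 ≤ i) (h2 : i ≤ n) (h3 : 1 ≤ j) (h4 : j ≤ n) :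
    (⟪stdE n i, stdE n j⟫ : ℝ) = if i = j then 1 else 0 := by
  rw [stdE, stdE, dif_pos ⟨h1, h2⟩, dif_pos ⟨h3, h4⟩]
  simp only [EuclideanSpace.inner_single_left, EuclideanSpace.single_apply]
  by_cases h : i = j
  · subst h; simp
  · have : i - 1 ≠ j - 1 := by omega
    simp [h, this]

lemma bcdAlpha_eq {t : BCD} {n : ℕ} (k : ℕ) : bcdAlpha t n k = al t n (stdE n) k := by
  unfold bcdAlpha al
  split_ifs with h1 h2
  · rfl
  · subst h2; rfl
  · cases t
    · simp [cs]
    · simp [cs]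
    · exact (h2 rfl).elim

lemma bcdSimple_eq {t : BCD} {n : ℕ} (hn : 1 ≤ n) (v : EuclideanSpace ℝ (Fin n)) : 
    v ∈ bcdSimple t n ↔ ∃ k, 1 ≤ k ∧ k ≤ n ∧ v = bcdAlpha t n k := by
  constructor
  · rintro (⟨i, h1, h2, rfl⟩ | h)
    · exact ⟨i, h1, h2.le, by rw [bcdAlpha.eq_def, if_pos h2]⟩
    · refine ⟨n, hn, le_rfl, ?_⟩
      rw [bcdAlpha.eq_def, if_neg (lt_irrefl _)]
      cases t <;> exact h
  · rintro ⟨k, h1, h2, rfl⟩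
    by_cases h : k < n
    · left
      exact ⟨k, h1, h, by rw [bcdAlpha.eq_def, if_pos h]⟩
    · right
      rw [bcdAlpha.eq_def, if_neg h]
      cases t <;> rfl

lemma bcdPos_eq {t : BCD} {n : ℕ} (v : EuclideanSpace ℝ (Fin n)) : 
    v ∈ bcdPos t n ↔ (∃ i j, 1 ≤ i ∧ i < j ∧ j ≤ n ∧ (v = stdE n i - stdE n j ∨ 
      v = stdE n i + stdE n j)) ∨ (t ≠ BCD.D ∧ ∃ i, 1 ≤ i ∧ i ≤ n ∧ v = cs t • stdE n i) := by
  unfold bcdPos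
  rw [Set.mem_setOf_eq]
  apply or_congr Iff.rfl
  cases t <;> simp [cs]

/-- injectivity of the simple roots -/
lemma al_inj {t : BCD} {n : ℕ} {f : ℕ → V} (hn2 : t = BCD.D → 2 ≤ n)
    (orth : ∀ i j, 1 ≤ i → i ≤ n → 1 ≤ j → j ≤ n → (⟪f i, f j⟫ : ℝ) = if i = j then 1 else 0)
    {k k' : ℕ} (h1 : 1 ≤ k) (h2 : k ≤ n) (h3 : 1 ≤ k') (h4 : k' ≤ n) 
    (h : al t n f k = al t n f k') : k = k' := by
  have key : ∀ k k', 1 ≤ k → k < k' → k' ≤ n → al t n f k = al t n f k' → False := by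
    intro k k' h1 h2 h3 h
    rw [al, if_pos (by omega)] at h
    have e1 := congrArg (fun v => (⟪v, f k⟫ : ℝ)) h
    have e2 := congrArg (fun v => (⟪v, f (k + 1)⟫ : ℝ)) h
    simp only [inner_sub_left] at e1 e2
    rw [orth k k (by omega) (by omega) (by omega) (by omega),
      orth (k+1) k (by omega) (by omega) (by omega) (by omega), if_pos rfl, if_neg (by omega)] at e1
    rw [orth k (k+1) (by omega) (by omega) (by omega) (by omega),
      orth (k+1) (k+1) (by omega) (by omega) (by omega) (by omega), if_pos rfl,
      if_neg (by omega)] at e2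
    by_cases hk' : k' < n
    · rw [al, if_pos hk', inner_sub_left, orth k' k (by omega) (by omega) (by omega) (by omega),
        orth (k'+1) k (by omega) (by omega) (by omega) (by omega), if_neg (by omega), 
        if_neg (by omega)] at e1
      norm_num at e1
    · by_cases ht : t = BCD.D
      · have := hn2 ht
        rw [al, if_neg hk', if_pos ht, inner_add_left, 
          orth (n-1) (k+1) (by omega) (by omega) (by omega) (by omega),
          orth n (k+1) (by omega) (by omega) (by omega) (by omega)] at e2
        split_ifs at e2 <;> norm_num at e2
      · rw [al, if_neg hk', if_neg ht, real_inner_smul_left,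
          orth n k (by omega) (by omega) (by omega) (by omega), if_neg (by omega)] at e1
        norm_num at e1
  rcases lt_trichotomy k k' with h' | h' | h'
  · exact (key k k' h1 h' h4 h).elim
  · exact h'
  · exact (key k' k h3 h' h2 h.symm).elim

end Part6

section Part7

lemma std_n {n : ℕ} {t : BCD} (S : RootSys (EuclideanSpace ℝ (Fin n)))
    (hpos : (S.pos : Set (EuclideanSpace ℝ (Fin n))) = bcdPos t n)
    (hΔ : (S.Δ : Set (EuclideanSpace ℝ (Fin n))) = bcdSimple t n) :
    1 ≤ n ∧ (t = BCD.D → 2 ≤ n) := by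
  have hn : 1 ≤ n := by
    by_contra hn
    have hn : n = 0 := by omega
    subst hn
    have hmem : ∃ v, v ∈ bcdSimple t 0 := by
      cases t
      · exact ⟨_, Or.inr rfl⟩
      · exact ⟨_, Or.inr rfl⟩
      · exact ⟨_, Or.inr rfl⟩
    obtain ⟨v, hv⟩ := hmem
    rw [← hΔ] at hv
    exact S.ne_zero v (S.pos_subset (S.simple_subset hv)) (Subsingleton.elim _ _)
  refine ⟨hn, ?_⟩
  rintro rfl
  by_contra h2
  have hmem : stdE n (n - 1) + stdE n n ∈ bcdSimple BCD.D n := Or.inr rfl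
  rw [← hΔ] at hmem
  have hmem : stdE n (n - 1) + stdE n n ∈ (S.pos : Set _) := S.simple_subset hmem
  rw [hpos] at hmem
  rcases hmem with ⟨i, j, h1, h2, h3, _⟩ | h
  · omega
  · exact h

lemma q_mono {m : ℕ} {q : ℕ → ℕ} (hmono : ∀ s : ℕ, 1 ≤ s → s ≤ m - 1 → q (s - 1) < q s)
    {s s' : ℕ} (h : s ≤ s') (h' : s' ≤ m - 1) : q s ≤ q s' := by
  induction s', h using Nat.le_induction with
  | base => exact le_rfl
  | succ k hk ih =>
    have := hmono (k + 1) (by omega) h'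
    simp only [Nat.add_sub_cancel] at this
    have := ih (by omega)
    omega

lemma std_Imem {n : ℕ} {t : BCD} (S : RootSys (EuclideanSpace ℝ (Fin n)))
    (hn : 1 ≤ n) (hn2 : t = BCD.D → 2 ≤ n)
    (hΔ : (S.Δ : Set (EuclideanSpace ℝ (Fin n))) = bcdSimple t n)
    (I : Finset (EuclideanSpace ℝ (Fin n))) (hI : I ⊆ S.Δ)
    (m : ℕ) (q : ℕ → ℕ)
    (hmono : ∀ s : ℕ, 1 ≤ s → s ≤ m - 1 → q (s - 1) < q s)
    (hqn : q (m - 1) ≤ n)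
    (hcompl : (S.Δ : Set (EuclideanSpace ℝ (Fin n))) \ (I : Set (EuclideanSpace ℝ (Fin n))) =
      {v | ∃ s : ℕ, 1 ≤ s ∧ s ≤ m - 1 ∧ v = bcdAlpha t n (q s)}) (v : EuclideanSpace ℝ (Fin n)) :
    v ∈ I ↔ ∃ k, 1 ≤ k ∧ k ≤ n ∧ v = al t n (stdE n) k ∧ ∀ s, 1 ≤ s → s ≤ m - 1 → q s ≠ k := by
  constructor
  · intro hv
    have h1 : v ∈ (S.Δ : Set _) := hI hv
    rw [hΔ, bcdSimple_eq hn] at h1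
    obtain ⟨k, hk1, hk2, rfl⟩ := h1
    refine ⟨k, hk1, hk2, bcdAlpha_eq k, ?_⟩
    rintro s s1 s2 rfl
    have : bcdAlpha t n (q s) ∈ (S.Δ : Set (EuclideanSpace ℝ (Fin n))) \ (I : Set _) := by
      rw [hcompl]
      exact ⟨s, s1, s2, rfl⟩
    exact this.2 hv
  · rintro ⟨k, hk1, hk2, rfl, h⟩
    by_contra hv
    have : al t n (stdE n) k ∈ (S.Δ : Set (EuclideanSpace ℝ (Fin n))) \ (I : Set _) := by
      refine ⟨?_, hv⟩
      rw [hΔ, bcdSimple_eq hn]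
      exact ⟨k, hk1, hk2, (bcdAlpha_eq k).symm⟩
    rw [hcompl] at this
    obtain ⟨s, s1, s2, e⟩ := this
    rw [bcdAlpha_eq] at e
    have a1 := hmono s s1 s2
    have a2 := q_mono hmono s2 le_rfl
    exact h s s1 s2 (al_inj hn2 (fun i j a b c d => stdE_inner a b c d) hk1 hk2 (by omega) (by omega) e).symm

/-- flipped basis for type D -/
def fl (n k : ℕ) : EuclideanSpace ℝ (Fin n) := if k = n then - stdE n n else stdE n k

lemma flip_setup {n : ℕ} (S : RootSys (EuclideanSpace ℝ (Fin n))) (hn2 : 2 ≤ n)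
    (hpos : (S.pos : Set (EuclideanSpace ℝ (Fin n))) = bcdPos BCD.D n)
    (I : Finset (EuclideanSpace ℝ (Fin n)))
    (m : ℕ) (q : ℕ → ℕ) (hq0 : q 0 = 0)
    (hmono : ∀ s : ℕ, 1 ≤ s → s ≤ m - 1 → q (s - 1) < q s)
    (hq : q (m - 1) = n - 1)
    (hI : ∀ v, v ∈ I ↔ ∃ k, 1 ≤ k ∧ k ≤ n ∧ v = al BCD.D n (stdE n) k ∧ 
      ∀ s, 1 ≤ s → s ≤ m - 1 → q s ≠ k) :
    Setup S I BCD.D n m (Function.update q (m - 1) n) (fl n) := by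
  have hm : m - 1 ≠ 0 := by
    intro h; rw [h] at hq; omega
  have hfl : ∀ k, k ≠ n → fl n k = stdE n k := fun k h => by rw [fl, if_neg h]
  have hfn : fl n n = - stdE n n := by rw [fl, if_pos rfl]
  have hlt : ∀ s, s < m - 1 → q s < n - 1 := by
    intro s hs
    have := q_mono hmono (s := s + 1) (s' := m - 1) (by omega) le_rfl
    have := hmono (s + 1) (by omega) (by omega)
    simp only [Nat.add_sub_cancel] at this
    omega
  have hup : ∀ s, s ≠ m - 1 → Function.update q (m - 1) n s = q s := fun s h => by
    rw [Function.update_of_ne h]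
  have hupm : Function.update q (m - 1) n (m - 1) = n := Function.update_self ..
  have al1 : ∀ k, k < n - 1 → al BCD.D n (fl n) k = al BCD.D n (stdE n) k := by
    intro k hk
    rw [al, al, if_pos (by omega), if_pos (by omega), hfl k (by omega), hfl (k+1) (by omega)]
  have al2 : al BCD.D n (fl n) (n - 1) = al BCD.D n (stdE n) n := by
    rw [al, al, if_pos (by omega), if_neg (lt_irrefl _), if_pos rfl, hfl (n-1) (by omega),
      show n - 1 + 1 = n by omega, hfn, sub_neg_eq_add]
  have al3 : al BCD.D n (fl n) n = al BCD.D n (stdE n) (n - 1) := by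
    rw [al, al, if_neg (lt_irrefl _), if_pos rfl, if_pos (by omega), hfl (n-1) (by omega),
      show n - 1 + 1 = n by omega, hfn, ← sub_eq_add_neg]
  refine ⟨?_, ?_, ?_, by omega, fun _ => hn2, ?_, ?_, ?_, ?_⟩
  · intro i j h1 h2 h3 h4
    by_cases hi : i = n <;> by_cases hj : j = n
    · subst hi; subst hj
      rw [hfn, inner_neg_neg, stdE_inner h1 h2 h1 h2]
    · subst hi
      rw [hfn, hfl j hj, inner_neg_left, stdE_inner h1 h2 h3 h4, if_neg (Ne.symm hj), neg_zero]
    · subst hj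
      rw [hfn, hfl i hi, inner_neg_right, stdE_inner h1 h2 h3 h4, if_neg hi, neg_zero]
    · rw [hfl i hi, hfl j hj, stdE_inner h1 h2 h3 h4]
  · intro v
    have : v ∈ S.pos ↔ v ∈ (S.pos : Set (EuclideanSpace ℝ (Fin n))) := Iff.rfl
    rw [this, hpos, bcdPos_eq]
    apply or_congr
    · refine exists_congr fun i => exists_congr fun j => and_congr_right fun h1 => 
        and_congr_right fun h2 => and_congr_right fun h3 => ?_
      rw [hfl i (by omega)]
      by_cases hj : j = n
      · subst hj
        rw [hfn, sub_neg_eq_add, ← sub_eq_add_neg, or_comm]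
      · rw [hfl j hj]
    · simp
  · intro v
    rw [hI]
    constructor
    · rintro ⟨k, h1, h2, rfl, h⟩
      by_cases hk : k < n - 1
      · refine ⟨k, h1, h2, (al1 k hk).symm, fun s s1 s2 => ?_⟩
        by_cases hs : s = m - 1
        · rw [hs, hupm]; omega
        · rw [hup s hs]; exact h s s1 s2
      · by_cases hk' : k = n
        · subst hk'
          refine ⟨k - 1, by omega, by omega, al2.symm, fun s s1 s2 => ?_⟩
          by_cases hs : s = m - 1
          · rw [hs, hupm]; omega
          · rw [hup s hs]
            have := hlt s (by omega)
            omega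
        · exfalso
          exact h (m - 1) (by omega) le_rfl (by omega)
    · rintro ⟨k, h1, h2, rfl, h⟩
      by_cases hk : k < n - 1
      · refine ⟨k, h1, h2, al1 k hk, fun s s1 s2 => ?_⟩
        by_cases hs : s = m - 1
        · rw [hs, hq]; omega
        · have := h s s1 s2
          rwa [hup s hs] at this
      · by_cases hk' : k = n
        · exfalso
          exact h (m - 1) (by omega) le_rfl (by rw [hupm, hk'])
        · have hk' : k = n - 1 := by omega
          subst hk'
          refine ⟨n, by omega, le_rfl, al2, fun s s1 s2 => ?_⟩
          have := q_mono hmono s2 le_rfl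
          omega
  · rw [hup 0 (Ne.symm hm), hq0]
  · intro s s1 s2
    rw [hup (s - 1) (by omega)]
    by_cases hs : s = m - 1
    · have := hlt (s - 1) (by omega)
      rw [hs] at this ⊢
      rw [hupm]; omega
    · rw [hup s hs]; exact hmono s s1 s2
  · rw [hupm]
  · intro _
    rw [hupm]; omega

end Part7
/-- Theorem D (vanishing of Jantzen coefficients in the classical types `B_n`, `C_n`,
`D_n`, in the standard realization in `ℝ^n`):  let `Δ \ I = {α_{q_1}, …, α_{q_{m-1}}}`
with `0 = q_0 < q_1 < ⋯ < q_{m-1} ≤ n`, let `λ, μ ∈ Λ_I⁺` with `μ = w s_β λ` for some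
`w ∈ W_I` and `β ∈ Ψ_λ⁺⁺`.  Then `c(λ, μ) = 0` iff one of the conditions (i), (ii),
(iii) below holds. -/
theorem statement_17 (n : ℕ) (t : BCD)
    (S : RootSys (EuclideanSpace ℝ (Fin n)))
    (hΦ : (S.Φ : Set (EuclideanSpace ℝ (Fin n))) = bcdRoots t n)
    (hpos : (S.pos : Set (EuclideanSpace ℝ (Fin n))) = bcdPos t n)
    (hΔ : (S.Δ : Set (EuclideanSpace ℝ (Fin n))) = bcdSimple t n)
    (I : Finset (EuclideanSpace ℝ (Fin n))) (hI : I ⊆ S.Δ)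
    (m : ℕ) (hm : 1 ≤ m) (q : ℕ → ℕ) (hq0 : q 0 = 0)
    (hmono : ∀ s : ℕ, 1 ≤ s → s ≤ m - 1 → q (s - 1) < q s)
    (hqn : q (m - 1) ≤ n)
    (hcompl : (S.Δ : Set (EuclideanSpace ℝ (Fin n))) \ (I : Set (EuclideanSpace ℝ (Fin n))) =
      {v | ∃ s : ℕ, 1 ≤ s ∧ s ≤ m - 1 ∧ v = bcdAlpha t n (q s)})
    (lam mu : HStar (EuclideanSpace ℝ (Fin n)))
    (hlam : lam ∈ LambdaP (I : Set (EuclideanSpace ℝ (Fin n))))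
    (hmu : mu ∈ LambdaP (I : Set (EuclideanSpace ℝ (Fin n))))
    (w : EuclideanSpace ℝ (Fin n) ≃ₗ[ℝ] EuclideanSpace ℝ (Fin n))
    (hw : w ∈ weyl (PhiI S I))
    (β : EuclideanSpace ℝ (Fin n))
    (hβ : β ∈ PsiPP S (PhiI S I) (S.Φ : Set (EuclideanSpace ℝ (Fin n))) lam)
    (hmuw : mu = wAct w (sRefl β lam)) :
    jc S (PhiI S I) (S.Φ : Set (EuclideanSpace ℝ (Fin n))) lam mu = 0 ↔
      -- (i)  Φ = B_n (resp. C_n), β = e_i (resp. 2e_i) or e_i + e_j with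
      --      q_{s-1} < i ≤ q_s ≤ q_{m-1} < j ≤ n; λ_i = λ_j ∈ ½ℤ_{>0} (resp. ℤ_{>0})
      --      and λ_k ∉ {0, -λ_i} for q_{s-1} < k ≤ q_s
      (∃ i j s : ℕ, 1 ≤ s ∧ s < m ∧ q (s - 1) < i ∧ i ≤ q s ∧ q s ≤ q (m - 1) ∧
        q (m - 1) < j ∧ j ≤ n ∧
        ((t = BCD.B ∧ (β = stdE n i ∨ β = stdE n i + stdE n j) ∧
            (∃ k : ℤ, 0 < k ∧ lam (stdE n i) = (k : ℂ) / 2)) ∨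
         (t = BCD.C ∧ (β = (2 : ℝ) • stdE n i ∨ β = stdE n i + stdE n j) ∧
            (∃ k : ℤ, 0 < k ∧ lam (stdE n i) = (k : ℂ)))) ∧
        lam (stdE n j) = lam (stdE n i) ∧
        (∀ k : ℕ, q (s - 1) < k → k ≤ q s →
          lam (stdE n k) ≠ 0 ∧ lam (stdE n k) ≠ -lam (stdE n i))) ∨
      -- (ii) Φ = B_n (resp. C_n), β = e_i (resp. 2e_i) or e_i + e_j with
      --      q_{s-1} < i < j ≤ q_s; λ_i ∈ ℤ_{>0}, λ_j = 0, λ_k ≠ -λ_i for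
      --      q_{s-1} < k ≤ q_s and λ_l ≠ λ_i for q_{m-1} < l ≤ n
      (∃ i j s : ℕ, 1 ≤ s ∧ s < m ∧ q (s - 1) < i ∧ i < j ∧ j ≤ q s ∧
        ((t = BCD.B ∧ (β = stdE n i ∨ β = stdE n i + stdE n j)) ∨
         (t = BCD.C ∧ (β = (2 : ℝ) • stdE n i ∨ β = stdE n i + stdE n j))) ∧
        (∃ k : ℤ, 0 < k ∧ lam (stdE n i) = (k : ℂ)) ∧
        lam (stdE n j) = 0 ∧
        (∀ k : ℕ, q (s - 1) < k → k ≤ q s → lam (stdE n k) ≠ -lam (stdE n i)) ∧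
        (∀ l : ℕ, q (m - 1) < l → l ≤ n → lam (stdE n l) ≠ lam (stdE n i))) ∨
      -- (iii) Φ = D_n, β = e_i + e_j or e_i + e_k with
      --      q_{s-1} < i < j ≤ q_s ≤ q_{m-1} < k < n; λ_i = λ_k ∈ ℤ_{>0},
      --      λ_j = λ_n = 0 and λ_l ≠ -λ_i for q_{s-1} < l ≤ q_s
      (t = BCD.D ∧ ∃ i j k s : ℕ, 1 ≤ s ∧ s < m ∧ q (s - 1) < i ∧ i < j ∧ j ≤ q s ∧
        q s ≤ q (m - 1) ∧ q (m - 1) < k ∧ k < n ∧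
        (β = stdE n i + stdE n j ∨ β = stdE n i + stdE n k) ∧
        lam (stdE n k) = lam (stdE n i) ∧
        (∃ z : ℤ, 0 < z ∧ lam (stdE n i) = (z : ℂ)) ∧
        lam (stdE n j) = 0 ∧ lam (stdE n n) = 0 ∧
        (∀ l : ℕ, q (s - 1) < l → l ≤ q s → lam (stdE n l) ≠ -lam (stdE n i))) := by
  obtain ⟨hn, hn2⟩ := std_n S hpos hΔ
  have hImem := std_Imem S hn hn2 hΔ I hI m q hmono hqn hcompl
  have hE : β ∈ EE S I lam mu := ⟨hβ, w, hw, hmuw⟩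
  by_cases hsp : t = BCD.D ∧ q (m - 1) = n - 1
  · obtain ⟨rfl, hq⟩ := hsp
    have h2 := hn2 rfl
    have H := flip_setup S h2 hpos I m q hq0 hmono hq hImem
    rw [H.final hlam hE]
    constructor
    · rintro (⟨i, j, s, h⟩ | ⟨i, j, s, h⟩ | ⟨_, i, j, k, s, h⟩)
      · exfalso
        rcases h.2.2.2.2.2.2.2.1 with ⟨h, _⟩ | ⟨h, _⟩ <;> exact absurd h (by simp)
      · exfalso
        rcases h.2.2.2.2.2.1 with ⟨h, _⟩ | ⟨h, _⟩ <;> exact absurd h (by simp)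
      · exfalso
        have h1 := h.2.2.2.2.2.2.1
        have h2 := h.2.2.2.2.2.2.2.1
        rw [Function.update_self] at h1
        omega
    · rintro (⟨i, j, s, h⟩ | ⟨i, j, s, h⟩ | ⟨_, i, j, k, s, h⟩)
      · exfalso
        rcases h.2.2.2.2.2.2.2.1 with ⟨h, _⟩ | ⟨h, _⟩ <;> exact absurd h (by simp)
      · exfalso
        rcases h.2.2.2.2.2.1 with ⟨h, _⟩ | ⟨h, _⟩ <;> exact absurd h (by simp)
      · exfalso
        have h1 := h.2.2.2.2.2.2.1
        have h2 := h.2.2.2.2.2.2.2.1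
        omega
  · have H : Setup S I t n m q (stdE n) := by
      refine ⟨fun i j a b c d => stdE_inner a b c d, ?_, hImem, hn, hn2, hq0, hmono, hqn, ?_⟩
      · intro v
        have : v ∈ S.pos ↔ v ∈ (S.pos : Set (EuclideanSpace ℝ (Fin n))) := Iff.rfl
        rw [this, hpos, bcdPos_eq]
      · intro ht hq
        exact hsp ⟨ht, hq⟩
    exact H.final hlam hE

end JantzenGVM
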